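/- arXiv:1209.3296 — 2 statements merged into one kernel-verified Lean document; each statement's English description precedes it below -/
import Mathlib

section
/- The intertwining operator 𝒥, defined on functions f : P → ℂ by (𝒥 f)(λ) := τ_{w_λ}⁻¹ (I_{w_λ} f)(λ₊), is a linear automorphism of the space of all functions P → ℂ; in particular it is bijective. -/
open scoped RealInnerProductSpace BigOperators Classical

noncomputable section

/-- Alternating composition `A ∘ B ∘ A ∘ ⋯` with `m` factors (starting with `A`). -/
def altComp {α : Type*} (A B : α → α) : ℕ → (α → α)
  | 0 => id
  | m + 1 => A ∘ altComp B A m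

/-- The sign of a real number, as an integer (with `sgnZ 0 = 0`). -/
def sgnZ (x : ℝ) : ℤ := if 0 < x then 1 else if x < 0 then -1 else 0

/-- The function `v(x) = (1-t²)∫₀ˣ dy/(1-2t cos y+t²)`. -/
def mvfun (t x : ℝ) : ℝ :=
  (1 - t ^ 2) * ∫ y in (0:ℝ)..x, 1 / (1 - 2 * t * Real.cos y + t ^ 2)

section AffineOps

variable {V : Type*} [NormedAddCommGroup V] [InnerProductSpace ℝ V]

/-- The coroot `α∨ = 2α/⟨α,α⟩`. -/
def coroot (α : V) : V := (2 / ⟪α, α⟫) • α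

/-- The affine root `a = α∨ + r c` (encoded as the pair `(α, r)`), as an affine
function on `V`. -/
def aval (c : ℝ) (a : V × ℤ) (x : V) : ℝ := ⟪x, coroot a.1⟫ + a.2 * c

/-- The affine reflection `s_a(x) = x - a(x) α` attached to `a = α∨ + r c`. -/
def sAff (c : ℝ) (a : V × ℤ) (x : V) : V := x - aval c a x • a.1

/-- `w` maps the affine root `a` to the affine root `b`, i.e. `(wa)(x) = a(w⁻¹x) = b(x)`. -/
def mapsRoot (c : ℝ) (w : Equiv.Perm V) (a b : V × ℤ) : Prop :=
  ∀ x : V, aval c a (w⁻¹ x) = aval c b x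

/-- The linear part `w′` of an affine transformation `w`. -/
def linPart (w : Equiv.Perm V) (x : V) : V := w x - w 0

variable {R : Type*} [Field R]

/-- The difference-reflection operator `T̂_a`. -/
def hatT (c : ℝ) (τ : V × ℤ → R) (a : V × ℤ) (f : V → R) (x : V) : R :=
  if 0 < aval c a x then τ a * f (sAff c a x)
  else if aval c a x = 0 then τ a * f x
  else (τ a)⁻¹ * f (sAff c a x) + (τ a - (τ a)⁻¹) * f x

/-- The discrete integral operator `J_a`. -/
def Jop (c : ℝ) (a : V × ℤ) (f : V → R) (x : V) : R :=
  if 0 < aval c a x then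
    - ∑ k ∈ Finset.Icc (1 : ℤ) ⌊aval c a x⌋, f (x - k • a.1)
  else if aval c a x = 0 then 0
  else ∑ k ∈ Finset.Ico (0 : ℤ) (-⌊aval c a x⌋), f (x + k • a.1)

/-- The integral-reflection operator `I_a = τ_a s_a + (τ_a - τ_a⁻¹) J_a`. -/
def Iop (c : ℝ) (τ : V × ℤ → R) (a : V × ℤ) (f : V → R) (x : V) : R :=
  τ a * f (sAff c a x) + (τ a - (τ a)⁻¹) * Jop c a f x

end AffineOps

/-- An irreducible reduced crystallographic root system spanning `V`, together with a
choice of positive roots, simple roots, and the highest short root. -/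
structure RootSystemData (V : Type*) [NormedAddCommGroup V] [InnerProductSpace ℝ V] :
    Type _ where
  n : ℕ
  n_pos : 1 ≤ n
  rank_eq : Module.finrank ℝ V = n
  R0 : Finset V
  ne_zero : ∀ α ∈ R0, α ≠ (0 : V)
  span_top : Submodule.span ℝ (R0 : Set V) = ⊤
  reduced : ∀ α ∈ R0, ∀ t : ℝ, t • α ∈ R0 → t = 1 ∨ t = -1
  crystallographic : ∀ α ∈ R0, ∀ β ∈ R0, ∃ k : ℤ, ⟪β, coroot α⟫ = (k : ℝ)
  reflect_mem : ∀ α ∈ R0, ∀ β ∈ R0, β - ⟪β, coroot α⟫ • α ∈ R0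
  irreducible : ∀ S : Finset V, S ⊆ R0 →
      (∀ a ∈ S, ∀ b ∈ R0, b ∉ S → ⟪a, b⟫ = 0) → S = ∅ ∨ S = R0
  pos : Finset V
  pos_subset : pos ⊆ R0
  pos_or_neg : ∀ α ∈ R0, α ∈ pos ∨ -α ∈ pos
  pos_not_both : ∀ α ∈ pos, -α ∉ pos
  pos_add : ∀ α ∈ pos, ∀ β ∈ pos, α + β ∈ R0 → α + β ∈ pos
  simpleRoot : Fin n → V
  simpleRoot_mem : ∀ j, simpleRoot j ∈ pos
  pos_natCombo : ∀ α ∈ pos, ∃ k : Fin n → ℕ, α = ∑ j, (k j : ℝ) • simpleRoot j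
  hshort : V
  hshort_mem : hshort ∈ pos
  hshort_short : ∀ α ∈ R0, ‖hshort‖ ≤ ‖α‖
  hshort_highest : ∀ α ∈ R0, ‖α‖ = ‖hshort‖ →
      ∃ k : Fin n → ℕ, hshort - α = ∑ j, (k j : ℝ) • simpleRoot j

namespace RootSystemData

variable {V : Type*} [NormedAddCommGroup V] [InnerProductSpace ℝ V]
variable (D : RootSystemData V)

/-- The weight lattice `P`. -/
def weightLattice : Set V :=
  {x : V | ∀ α ∈ D.R0, ∃ k : ℤ, ⟪x, coroot α⟫ = (k : ℝ)}

/-- The root lattice `Q`. -/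
def rootLattice : Set V := (Submodule.span ℤ (D.R0 : Set V) : Set V)

/-- The coweight lattice `P∨`. -/
def coweightLattice : Set V :=
  {x : V | ∀ α ∈ D.R0, ∃ k : ℤ, ⟪x, α⟫ = (k : ℝ)}

/-- The dominant cone. -/
def dominant : Set V := {x : V | ∀ α ∈ D.pos, 0 ≤ ⟪x, coroot α⟫}

/-- `ω` is a minuscule (dominant) weight. -/
def IsMinuscule (ω : V) : Prop :=
  ω ∈ D.weightLattice ∧ ω ∈ D.dominant ∧ ω ≠ 0 ∧
    ∀ α ∈ D.pos, ⟪ω, coroot α⟫ ≤ 1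

/-- `ω` is the quasi-minuscule weight, i.e. the highest short root. -/
def IsQuasiMinuscule (ω : V) : Prop := ω = D.hshort

/-- The saturated set `P_ϑ` containing the (quasi-)minuscule weights. -/
def Ptheta : Set V :=
  {ν : V | ν ∈ D.weightLattice ∧ ∀ α ∈ D.R0, α ≠ ν → |⟪ν, coroot α⟫| ≤ 1}

/-- Half sum of the positive roots. -/
def rhoHalf : V := (2⁻¹ : ℝ) • ∑ α ∈ D.pos, α

/-- Half sum of the positive coroots. -/
def rhoVee : V := (2⁻¹ : ℝ) • ∑ α ∈ D.pos, coroot α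

/-- `(α, r)` encodes an affine root. -/
def IsAffRoot (a : V × ℤ) : Prop := a.1 ∈ D.R0

/-- `(α, r)` encodes a positive affine root. -/
def IsAffPos (a : V × ℤ) : Prop :=
  a.1 ∈ D.R0 ∧ (1 ≤ a.2 ∨ (a.2 = 0 ∧ a.1 ∈ D.pos))

/-- `(α, r)` encodes a negative affine root. -/
def IsAffNeg (a : V × ℤ) : Prop := D.IsAffPos (-a.1, -a.2)

/-- The simple affine roots `a₀ = -ϑ∨ + c`, `a_j = α_j∨`. -/
def aSimple (j : Fin (D.n + 1)) : V × ℤ :=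
  Fin.cons (α := fun _ => V × ℤ) (-D.hshort, (1 : ℤ))
    (fun i => (D.simpleRoot i, (0 : ℤ))) j

/-- The reflections generating the finite Weyl group `W₀`. -/
def W0Gens : Set (Equiv.Perm V) :=
  {e | ∃ α ∈ D.R0, ∀ x, e x = x - ⟪x, coroot α⟫ • α}

/-- The finite Weyl group `W₀`. -/
def W0 : Subgroup (Equiv.Perm V) := Subgroup.closure D.W0Gens

variable (c : ℝ)

/-- The affine reflections generating the affine Weyl group `W_R`. -/
def AffGens : Set (Equiv.Perm V) :=
  {e | ∃ a : V × ℤ, D.IsAffRoot a ∧ ∀ x, e x = sAff c a x}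

/-- The affine Weyl group `W_R`. -/
def WR : Subgroup (Equiv.Perm V) := Subgroup.closure (D.AffGens c)

/-- The translations `t_{cλ}`, `λ ∈ P`. -/
def TransGens : Set (Equiv.Perm V) :=
  {e | ∃ lam ∈ D.weightLattice, ∀ x : V, e x = x + c • lam}

/-- The extended affine Weyl group `W = W₀ ⋉ t(cP)`. -/
def Wext : Subgroup (Equiv.Perm V) :=
  Subgroup.closure (D.AffGens c ∪ D.TransGens c)

/-- The set `R(w) = R⁺ ∩ w⁻¹(R⁻)`. -/
def RW (w : Equiv.Perm V) : Set (V × ℤ) :=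
  {a | D.IsAffPos a ∧ ∃ b : V × ℤ, D.IsAffNeg b ∧ mapsRoot c w a b}

/-- The length `ℓ(w) = #R(w)`. -/
def len (w : Equiv.Perm V) : ℕ := (D.RW c w).ncard

/-- The closed fundamental alcove `A_c`. -/
def alcove : Set V := {x | ∀ a : V × ℤ, D.IsAffPos a → 0 ≤ aval c a x}

/-- `wmin x` is the unique shortest element of the affine Weyl group mapping `x` into
the fundamental alcove. -/
def IsWmin (wmin : V → Equiv.Perm V) : Prop :=
  ∀ x : V, wmin x ∈ D.WR c ∧ (wmin x) x ∈ D.alcove c ∧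
    ∀ w ∈ D.WR c, w x ∈ D.alcove c → D.len c (wmin x) < D.len c w ∨ w = wmin x

/-- One step in the Bruhat order: `w < w s_a` whenever `ℓ(w) < ℓ(w s_a)`. -/
def bruhatStep (w w' : Equiv.Perm V) : Prop :=
  ∃ a : V × ℤ, D.IsAffPos a ∧ ∃ e : Equiv.Perm V,
    (∀ x, e x = sAff c a x) ∧ w' = w * e ∧ D.len c w < D.len c w'

/-- The Bruhat order on the affine Weyl group. -/
def bruhatLE (w w' : Equiv.Perm V) : Prop :=
  Relation.ReflTransGen (D.bruhatStep c) w w'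

/-- The partial order on `V`: `x ≤ y` iff `x₊ = y₊` and `w_x ≤ w_y` (Bruhat). -/
def vle (wmin : V → Equiv.Perm V) (x y : V) : Prop :=
  (wmin x) x = (wmin y) y ∧ D.bruhatLE c (wmin x) (wmin y)

/-- The interval `[x, y]` for the order `vle`. -/
def vInterval (wmin : V → Equiv.Perm V) (x y : V) : Set V :=
  {z : V | D.vle c wmin x z ∧ D.vle c wmin z y}

/-- The partial order `⪯` on the weight lattice:
`μ ⪯ λ` iff `λ - μ ∈ Q` and `Conv [μ₊, μ] ⊆ Conv [λ₊, λ]`. -/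
def pleq (wmin : V → Equiv.Perm V) (μ lam : V) : Prop :=
  lam - μ ∈ D.rootLattice ∧
    convexHull ℝ (D.vInterval c wmin ((wmin μ) μ) μ)
      ⊆ convexHull ℝ (D.vInterval c wmin ((wmin lam) lam) lam)

section Ops

variable {R : Type*} [Field R]

/-- `τ` is a multiplicity function: nonvanishing on affine roots, and invariant
under the (extended affine) Weyl group action on the affine roots. -/
def IsMultiplicity (τ : V × ℤ → R) : Prop :=
  (∀ a : V × ℤ, D.IsAffRoot a → τ a ≠ 0) ∧
    ∀ w ∈ D.Wext c, ∀ a b : V × ℤ, D.IsAffRoot a → D.IsAffRoot b →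
      mapsRoot c w a b → τ a = τ b

/-- `τ_w = ∏_{a ∈ R(w)} τ_a`. -/
def tauw (τ : V × ℤ → R) (w : Equiv.Perm V) : R := ∏ᶠ a ∈ D.RW c w, τ a

/-- `τ₀`, the multiplicity of the affine simple root `a₀`. -/
def tauZero (τ : V × ℤ → R) : R := τ (-D.hshort, (1 : ℤ))

/-- The operator `I_{j₁} ∘ ⋯ ∘ I_{jℓ}` attached to a word in the simple reflections. -/
def wordOp (τ : V × ℤ → R) (l : List (Fin (D.n + 1))) : (V → R) → V → R :=
  (l.map fun j => Iop c τ (D.aSimple j)).foldr (· ∘ ·) id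

/-- `l` is a reduced word for `w`, i.e. `w = s_{j₁} ∘ ⋯ ∘ s_{jℓ}` with `ℓ = ℓ(w)`. -/
def IsReducedWord (w : Equiv.Perm V) (l : List (Fin (D.n + 1))) : Prop :=
  l.length = D.len c w ∧
    ∀ x : V, w x = ((l.map fun j => sAff c (D.aSimple j)).foldr (· ∘ ·) id) x

/-- `e∨_τ(η) = ∏_{α ∈ R₀⁺} τ_{α∨}^{⟨η,α∨⟩}`. -/
def etau (τ : V × ℤ → R) (η : V) : R :=
  ∏ α ∈ D.pos, τ (α, (0 : ℤ)) ^ ⌊⟪η, coroot α⟫⌋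

/-- `h∨_τ = τ₀² e∨_τ(ϑ)`. -/
def hvee (τ : V × ℤ → R) : R := D.tauZero τ ^ 2 * D.etau τ D.hshort

/-- `θ(μ) = #{b ∈ R(w_μ) : b(μ) = -2}`. -/
def theta (wmin : V → Equiv.Perm V) (μ : V) : ℕ :=
  {b : V × ℤ | b ∈ D.RW c (wmin μ) ∧ aval c b μ = -2}.ncard

/-- The coefficient `c_{λ,η} = θ(λ-η) e∨_τ(η) (h∨_τ)^{-sign⟨λ,η∨⟩}`. -/
def ccoef (τ : V × ℤ → R) (wmin : V → Equiv.Perm V) (lam η : V) : R :=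
  (D.theta c wmin (lam - η) : R) * D.etau τ η *
    D.hvee τ ^ (-sgnZ ⟪lam, coroot η⟫)

/-- The coefficient `a_{λ,ν} = τ_{w_{w_λ(λ-ν)}} τ_{w_{w_λ(λ-ν)} w_λ} τ_{w_λ}⁻¹`. -/
def acoef (τ : V × ℤ → R) (wmin : V → Equiv.Perm V) (lam ν : V) : R :=
  D.tauw c τ (wmin ((wmin lam) (lam - ν))) *
    D.tauw c τ (wmin ((wmin lam) (lam - ν)) * wmin lam) *
    (D.tauw c τ (wmin lam))⁻¹

/-- The coefficient `b_{λ,ν}`. -/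
def bcoef (τ : V × ℤ → R) (wmin : V → Equiv.Perm V) (lam ν : V) : R :=
  if (wmin (lam - ν)) (lam - ν) = (wmin lam) lam then
    D.tauw c τ (wmin ((wmin lam) (lam - ν))) ^ 2 *
      (if D.IsAffNeg (ν, ⌊(1 - ⟪lam, coroot ν⟫) / c⌋) then 1 else 0)
  else D.ccoef c τ wmin ((wmin lam) lam) (linPart (wmin lam) ν)

/-- The intertwining operator `(𝒥f)(λ) = τ_{w_λ}⁻¹ (I_{w_λ} f)(λ₊)`, where `Iw` assigns
to each `w_λ` the composite of integral-reflection operators along a reduced word. -/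
def Jcal (τ : V × ℤ → R) (wmin : V → Equiv.Perm V)
    (Iw : Equiv.Perm V → (V → R) → V → R) (f : V → R) (x : V) : R :=
  (D.tauw c τ (wmin x))⁻¹ * Iw (wmin x) f ((wmin x) x)

end Ops

/-- The Yang–Yang type Morse function `𝒱_μ`. -/
def morse (t : V → ℝ) (μ ξ : V) : ℝ :=
  (c / 2) * ⟪ξ, ξ⟫ - 2 * Real.pi * ⟪D.rhoVee + μ, ξ⟫ +
    ∑ α ∈ D.pos, (2 / ⟪α, α⟫) * ∫ x in (0:ℝ)..(⟪ξ, α⟫), mvfun (t α) x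

/-- The critical equation `cξ + ∑_{α>0} v_α(⟨ξ,α⟩) α∨ = 2π(ρ∨+μ)`. -/
def criticalEq (t : V → ℝ) (μ ξ : V) : Prop :=
  c • ξ + ∑ α ∈ D.pos, mvfun (t α) ⟪ξ, α⟫ • coroot α
    = (2 * Real.pi) • (D.rhoVee + μ)

/-- The Hessian bilinear form `H_{η,ζ}(ξ)`. -/
def hessForm (t : V → ℝ) (ξ η ζ : V) : ℝ :=
  c * ⟪η, ζ⟫ + ∑ α ∈ D.R0,
    (1 - t α ^ 2) * ⟪η, α⟫ * ⟪ζ, α⟫ /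
      (⟪α, α⟫ * (1 - 2 * t α * Real.cos ⟪ξ, α⟫ + t α ^ 2))

/-- `κ_± = (2/n) ∑_{α>0} (1-t_α²)/(1 ± |t_α|)²`; here `s = ±1`. -/
def kappaPM (t : V → ℝ) (s : ℝ) : ℝ :=
  (2 / (D.n : ℝ)) * ∑ α ∈ D.pos, (1 - t α ^ 2) / (1 + s * |t α|) ^ 2

end RootSystemData

open RootSystemData in
/-- The intertwining operator `𝒥` as an operator on the space of functions `P → ℂ`
(a function on the weight lattice is extended by zero to apply the integral-reflection
operators, on which the restriction of `𝒥` to `P` does not depend). -/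
def JcalP {V : Type*} [NormedAddCommGroup V] [InnerProductSpace ℝ V]
    (D : RootSystemData V) (c : ℝ) (τ : V × ℤ → ℂ) (wmin : V → Equiv.Perm V)
    (Iw : Equiv.Perm V → (V → ℂ) → V → ℂ)
    (f : D.weightLattice → ℂ) (lam : D.weightLattice) : ℂ :=
  D.Jcal c τ wmin Iw
    (fun x => if h : x ∈ D.weightLattice then f ⟨x, h⟩ else 0) lam.1

namespace RootSystemData
section Aux
variable {V : Type*} [NormedAddCommGroup V] [InnerProductSpace ℝ V]

lemma aux_coroot_inner (x α : V) : ⟪x, coroot α⟫ = 2 / ⟪α, α⟫ * ⟪x, α⟫ := by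
  simp [coroot, inner_smul_right]

lemma aux_coroot_neg (α : V) : coroot (-α) = - coroot α := by
  simp [coroot]

lemma aux_self_ne {α : V} (h : α ≠ 0) : ⟪α, α⟫ ≠ 0 := by
  simpa using h

lemma aux_self_coroot {α : V} (h : α ≠ 0) : ⟪α, coroot α⟫ = 2 := by
  rw [aux_coroot_inner]; field_simp [aux_self_ne h]

lemma aux_refl_norm {α : V} (h : α ≠ 0) (β : V) :
    ⟪β - ⟪β, coroot α⟫ • α, β - ⟪β, coroot α⟫ • α⟫ = ⟪β, β⟫ := by
  have := aux_self_ne h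
  rw [aux_coroot_inner]
  simp only [inner_sub_left, inner_sub_right, inner_smul_left, inner_smul_right,
    real_inner_comm α β]
  simp
  field_simp
  ring

lemma aux_refl_coroot {α : V} (h : α ≠ 0) (β : V) :
    coroot (β - ⟪β, coroot α⟫ • α) = coroot β - ⟪α, coroot β⟫ • coroot α := by
  have h1 := aux_refl_norm h β
  unfold coroot at h1 ⊢
  rw [h1]
  simp only [smul_sub, smul_smul, inner_smul_right]
  rw [real_inner_comm α β]
  congr 2
  ring

lemma aux_coroot_inj {α β : V} (ha : α ≠ 0) (hb : β ≠ 0) (h : coroot α = coroot β) : α = β := by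
  have h1 : ∀ α : V, α ≠ 0 → coroot (coroot α) = α := by
    intro α ha
    have := aux_self_ne ha
    unfold coroot
    rw [inner_smul_left, inner_smul_right, smul_smul]
    simp only [conj_trivial]
    conv_rhs => rw [← one_smul ℝ α]
    congr 1
    field_simp
  rw [← h1 α ha, h, h1 β hb]

lemma aux_aval_inj {c : ℝ} (hc : c ≠ 0) {a b : V × ℤ} (ha : a.1 ≠ 0) (hb : b.1 ≠ 0)
    (h : ∀ x, aval c a x = aval c b x) : a = b := by
  have h0 := h 0
  simp [aval, hc] at h0
  have : coroot a.1 = coroot b.1 := by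
    apply ext_inner_left ℝ
    intro x
    have := h x
    simpa [aval, h0] using this
  exact Prod.ext (aux_coroot_inj ha hb this) h0

lemma aux_aval_neg (c : ℝ) (a : V × ℤ) (x : V) : aval c (-a.1, -a.2) x = - aval c a x := by
  simp [aval, aux_coroot_neg]; ring

lemma aux_aval_sub (c : ℝ) (a : V × ℤ) (x y : V) (t : ℝ) :
    aval c a (x - t • y) = aval c a x - t * ⟪y, coroot a.1⟫ := by
  simp [aval, inner_sub_left, inner_smul_left]; ring

lemma aux_aval_sAff {c : ℝ} {a : V × ℤ} (ha : a.1 ≠ 0) (x : V) :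
    aval c a (sAff c a x) = - aval c a x := by
  rw [sAff, aux_aval_sub, aux_self_coroot ha]; ring

lemma aux_sAff_invol {c : ℝ} {a : V × ℤ} (ha : a.1 ≠ 0) (x : V) :
    sAff c a (sAff c a x) = x := by
  rw [sAff, aux_aval_sAff ha, sAff]; simp

/-- reflection on affine roots -/
def aux_sR (a b : V × ℤ) : V × ℤ :=
  (b.1 - ⟪b.1, coroot a.1⟫ • a.1, b.2 - ⌊⟪a.1, coroot b.1⟫⌋ * a.2)

variable (D : RootSystemData V)

lemma aux_sR_root {a b : V × ℤ} (ha : a.1 ∈ D.R0) (hb : b.1 ∈ D.R0) : (aux_sR a b).1 ∈ D.R0 :=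
  D.reflect_mem _ ha _ hb

lemma aux_sR_aval {a b : V × ℤ} (c : ℝ) (ha : a.1 ∈ D.R0) (hb : b.1 ∈ D.R0) (x : V) :
    aval c (aux_sR a b) x = aval c b (sAff c a x) := by
  obtain ⟨k, hk⟩ := D.crystallographic _ hb _ ha
  rw [sAff, aux_aval_sub]
  simp only [aval, aux_sR]
  rw [aux_refl_coroot (D.ne_zero _ ha), inner_sub_right, inner_smul_right, hk]
  simp
  ring

lemma aux_neg_mem {α : V} (h : α ∈ D.R0) : -α ∈ D.R0 := by
  have := D.reflect_mem α h α h
  rw [aux_self_coroot (D.ne_zero _ h)] at this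
  convert this using 1
  rw [two_smul]; abel

lemma aux_pos_or_neg {a : V × ℤ} (h : a.1 ∈ D.R0) : D.IsAffPos a ∨ D.IsAffNeg a := by
  have h' := D.aux_neg_mem h
  have := D.pos_or_neg _ h
  unfold IsAffNeg IsAffPos
  simp only [h, h', true_and]
  have : a.2 = 0 ∨ 1 ≤ a.2 ∨ 1 ≤ -a.2 := by omega
  grind

lemma aux_not_both {a : V × ℤ} (h : D.IsAffPos a) (h' : D.IsAffNeg a) : False := by
  unfold IsAffNeg at h'
  obtain ⟨h1, h2⟩ := h
  obtain ⟨h3, h4⟩ := h'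
  simp only at h3 h4
  have := D.pos_not_both a.1
  grind

lemma aux_finDim (D : RootSystemData V) : FiniteDimensional ℝ V :=
  have _ := D.n_pos
  FiniteDimensional.of_finrank_pos (by rw [D.rank_eq]; exact D.n_pos)

lemma aux_span : ⊤ ≤ Submodule.span ℝ (Set.range D.simpleRoot) := by
  rw [← D.span_top, Submodule.span_le]
  have key : ∀ α ∈ D.pos, α ∈ Submodule.span ℝ (Set.range D.simpleRoot) := by
    intro α h
    obtain ⟨k, rfl⟩ := D.pos_natCombo α h
    exact Submodule.sum_mem _ fun j _ => Submodule.smul_mem _ _ (Submodule.subset_span ⟨j, rfl⟩)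
  intro α h
  rcases D.pos_or_neg α h with h | h
  · exact key _ h
  · simpa using key _ h

lemma aux_linInd : LinearIndependent ℝ D.simpleRoot :=
  linearIndependent_of_top_le_span_of_card_eq_finrank D.aux_span (by simp [D.rank_eq])

lemma aux_coef {k l : Fin D.n → ℝ} (h : ∑ j, k j • D.simpleRoot j = ∑ j, l j • D.simpleRoot j) :
    k = l := by
  have h2 := Fintype.linearIndependent_iff.1 D.aux_linInd (k - l)
    (by simp [sub_smul, Finset.sum_sub_distrib, h])
  funext i
  have := h2 i
  simpa [sub_eq_zero] using this

/-- simple reflections permute the other positive roots -/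
lemma aux_simple_perm (j : Fin D.n) {α : V} (h : α ∈ D.pos) (hne : α ≠ D.simpleRoot j) :
    α - ⟪α, coroot (D.simpleRoot j)⟫ • D.simpleRoot j ∈ D.pos := by
  have hj := D.pos_subset (D.simpleRoot_mem j)
  have hr := D.reflect_mem _ hj _ (D.pos_subset h)
  rcases D.pos_or_neg _ hr with h1 | h1
  · exact h1
  exfalso
  set m := ⟪α, coroot (D.simpleRoot j)⟫
  obtain ⟨k, hk⟩ := D.pos_natCombo α h
  obtain ⟨l, hl⟩ := D.pos_natCombo _ h1
  have hz : ∀ i, i ≠ j → k i = 0 := by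
    intro i hi
    have := D.aux_coef (k := fun i => (if i = j then m else 0)) (l := fun i => (k i : ℝ) + l i) (by
      simp only [add_smul, Finset.sum_add_distrib, ← hk, ← hl, ite_smul, zero_smul]
      simp)
    have := congrFun this i
    simp only [hi, if_false] at this
    have h3 : (0:ℝ) ≤ k i := Nat.cast_nonneg _
    have h4 : (0:ℝ) ≤ l i := Nat.cast_nonneg _
    have : (k i : ℝ) = 0 := by linarith
    exact_mod_cast this
  have hα : α = (k j : ℝ) • D.simpleRoot j := by
    rw [hk]
    apply Finset.sum_eq_single
    · intro i _ hi; simp [hz i hi]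
    · simp
  rcases D.reduced _ hj (k j) (hα ▸ D.pos_subset h) with h5 | h5
  · apply hne; rw [hα, h5, one_smul]
  · have h3 : (0:ℝ) ≤ k j := Nat.cast_nonneg _
    linarith

lemma aux_theta_dom {α : V} (h : α ∈ D.pos) : 0 ≤ ⟪D.hshort, coroot α⟫ := by
  by_contra hlt
  push Not at hlt
  have hα := D.pos_subset h
  have hr := D.reflect_mem _ hα _ (D.pos_subset D.hshort_mem)
  have hn := aux_refl_norm (D.ne_zero _ hα) D.hshort
  set m := ⟪D.hshort, coroot α⟫
  obtain ⟨l, hl⟩ := D.hshort_highest _ hr (by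
    rw [real_inner_self_eq_norm_sq, real_inner_self_eq_norm_sq] at hn
    exact (sq_eq_sq₀ (norm_nonneg _) (norm_nonneg _)).1 hn)
  obtain ⟨k, hk⟩ := D.pos_natCombo α h
  have := D.aux_coef (k := fun i => m * k i) (l := fun i => l i) (by
      rw [← hl]
      simp only [mul_smul, ← Finset.smul_sum, ← hk]
      simp)
  have hz : ∀ i, k i = 0 := by
    intro i
    have := congrFun this i
    by_contra hk0
    have h3 : (0:ℝ) < k i := by exact_mod_cast Nat.pos_of_ne_zero hk0
    have h4 : (0:ℝ) ≤ l i := Nat.cast_nonneg _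
    nlinarith
  apply D.ne_zero _ hα
  rw [hk]; simp [hz]

lemma aux_theta_small {α : V} (h : α ∈ D.R0) :
    α = D.hshort ∨ α = -D.hshort ∨ (⟪D.hshort, coroot α⟫ = 0 ∨ ⟪D.hshort, coroot α⟫ = 1 ∨
      ⟪D.hshort, coroot α⟫ = -1) := by
  have h0 := D.ne_zero _ h
  have hs := D.hshort_short _ h
  have ht := D.ne_zero _ (D.pos_subset D.hshort_mem)
  obtain ⟨k, hk⟩ := D.crystallographic _ h _ (D.pos_subset D.hshort_mem)
  have hself : (0:ℝ) < ⟪α, α⟫ := by simpa using real_inner_self_pos.2 h0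
  have hin : ⟪D.hshort, α⟫ = k * ⟪α, α⟫ / 2 := by
    rw [← hk, aux_coroot_inner]; field_simp
  have hsq : ⟪D.hshort, D.hshort⟫ ≤ ⟪α, α⟫ := by
    rw [real_inner_self_eq_norm_sq, real_inner_self_eq_norm_sq]
    gcongr
  by_cases hk1 : 2 ≤ k
  · left
    have hk1' : (2:ℝ) ≤ k := by exact_mod_cast hk1
    have : ⟪α - D.hshort, α - D.hshort⟫ ≤ 0 := by
      simp only [inner_sub_left, inner_sub_right, real_inner_comm D.hshort α]
      rw [real_inner_comm α D.hshort] at *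
      nlinarith
    exact sub_eq_zero.1 (real_inner_self_nonpos.1 this)
  by_cases hk2 : k ≤ -2
  · right; left
    have hk1' : (k:ℝ) ≤ -2 := by exact_mod_cast hk2
    have : ⟪α + D.hshort, α + D.hshort⟫ ≤ 0 := by
      simp only [inner_add_left, inner_add_right, real_inner_comm D.hshort α]
      rw [real_inner_comm α D.hshort] at *
      nlinarith
    exact add_eq_zero_iff_eq_neg.1 (real_inner_self_nonpos.1 this)
  right; right
  rw [hk]
  have : k = 0 ∨ k = 1 ∨ k = -1 := by omega
  rcases this with h | h | h <;> simp [h]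

lemma aux_aSimple_root (j : Fin (D.n + 1)) : (D.aSimple j).1 ∈ D.R0 := by
  refine Fin.cases ?_ (fun i => ?_) j
  · exact D.aux_neg_mem (D.pos_subset D.hshort_mem)
  · exact D.pos_subset (D.simpleRoot_mem i)

lemma aux_aSimple_pos (j : Fin (D.n + 1)) : D.IsAffPos (D.aSimple j) := by
  refine ⟨D.aux_aSimple_root j, ?_⟩
  refine Fin.cases ?_ (fun i => ?_) j
  · left; exact le_refl _
  · right; exact ⟨rfl, D.simpleRoot_mem i⟩

lemma aux_sR_pos (j : Fin (D.n + 1)) {b : V × ℤ} (hb : D.IsAffPos b) (hne : b ≠ D.aSimple j) :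
    D.IsAffPos (aux_sR (D.aSimple j) b) := by
  refine ⟨aux_sR_root D (D.aux_aSimple_root j) hb.1, ?_⟩
  obtain ⟨α, r⟩ := b
  obtain ⟨hα, hr⟩ := hb
  simp only at hα hr
  revert hne
  refine Fin.cases ?_ (fun i => ?_) j
  · intro hne
    have e : D.aSimple 0 = (-D.hshort, 1) := rfl
    rw [e] at hne ⊢
    have hθ := D.hshort_mem
    have hθR := D.pos_subset D.hshort_mem
    have hθ0 := D.ne_zero _ hθR
    have hR := D.reflect_mem _ hθR _ hα
    simp only [aux_sR, aux_coroot_neg, inner_neg_left, inner_neg_right, neg_smul_neg]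
    rcases D.aux_theta_small hα with h | h | h
    · left
      subst h
      rw [aux_self_coroot hθ0]
      norm_num
      rcases hr with h | h <;> omega
    · subst h
      simp only [aux_coroot_neg, inner_neg_left, inner_neg_right, aux_self_coroot hθ0]
      norm_num
      have h1 : 1 ≤ r := by
        rcases hr with h | h
        · exact h
        · exact absurd h.2 (D.pos_not_both _ hθ)
      have h2 : r ≠ 1 := by
        rintro rfl; exact hne rfl
      by_cases h3 : 3 ≤ r
      · left; omega
      · right
        refine ⟨by omega, ?_⟩
        convert hθ using 1
        rw [two_smul]; abel
    · have hsym : ⟪D.hshort, coroot α⟫ = 0 → ⟪α, coroot D.hshort⟫ = 0 := by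
        intro h
        rw [aux_coroot_inner] at h ⊢
        have h2 := aux_self_ne (D.ne_zero _ hα)
        have : ⟪D.hshort, α⟫ = 0 := by
          rcases mul_eq_zero.1 h with h | h
          · simp at h; exact absurd h (D.ne_zero _ hα)
          · exact h
        rw [real_inner_comm D.hshort α, this, mul_zero]
      rcases h with h | h | h
      · rw [h, hsym h]; simpa using hr
      · left; rw [h]; norm_num
        rcases hr with h | h <;> omega
      · rw [h]; norm_num
        rcases hr with h' | h'
        · by_cases h3 : 2 ≤ r
          · left; omega
          right
          refine ⟨by omega, ?_⟩
          rcases D.pos_or_neg _ hR with h4 | h4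
          · exact h4
          · exfalso
            have h5 := D.aux_theta_dom h4
            rw [aux_coroot_neg, aux_refl_coroot hθ0, inner_neg_right, inner_sub_right,
              inner_smul_right, h, aux_self_coroot hθ0] at h5
            norm_num at h5
        · exfalso
          have := D.aux_theta_dom h'.2
          linarith
  · intro hne
    have e : D.aSimple i.succ = (D.simpleRoot i, 0) := rfl
    rw [e] at hne ⊢
    simp only [aux_sR, mul_zero, sub_zero]
    rcases hr with h | h
    · exact Or.inl h
    · right
      refine ⟨h.1, D.aux_simple_perm i h.2 ?_⟩
      rintro rfl
      exact hne (by rw [h.1])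

end Aux
end RootSystemData

namespace RootSystemData
section Aux2
variable {V : Type*} [NormedAddCommGroup V] [InnerProductSpace ℝ V] (D : RootSystemData V) (c : ℝ)

/-- the map `s_{j₁} ∘ ⋯ ∘ s_{jℓ}` of a word -/
def aux_wfn (l : List (Fin (D.n + 1))) : V → V :=
  (l.map fun j => sAff c (D.aSimple j)).foldr (· ∘ ·) id

/-- the map `s_{jℓ} ∘ ⋯ ∘ s_{j₁}` of a word -/
def aux_end : List (Fin (D.n + 1)) → V → V
  | [], y => y
  | j :: l, y => aux_end l (sAff c (D.aSimple j) y)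

/-- action of a word on affine roots -/
def aux_ract : List (Fin (D.n + 1)) → V × ℤ → V × ℤ
  | [], b => b
  | j :: l, b => aux_sR (D.aSimple j) (aux_ract l b)

/-- action of the inverse of a word on affine roots -/
def aux_rinv : List (Fin (D.n + 1)) → V × ℤ → V × ℤ
  | [], b => b
  | j :: l, b => aux_rinv l (aux_sR (D.aSimple j) b)

/-- candidates for the inversion set -/
def aux_B : List (Fin (D.n + 1)) → List (V × ℤ)
  | [] => []
  | j :: l => aux_rinv D l (D.aSimple j) :: aux_B l

lemma aux_B_length (l : List (Fin (D.n + 1))) : (D.aux_B l).length = l.length := by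
  induction l with
  | nil => rfl
  | cons j l ih => simp [aux_B, ih]

lemma aux_B_mem (pre : List (Fin (D.n + 1))) (j) (suf) :
    D.aux_rinv suf (D.aSimple j) ∈ D.aux_B (pre ++ j :: suf) := by
  induction pre with
  | nil => simp [aux_B]
  | cons i l ih => simp [aux_B, ih]

lemma aux_wfn_cons (j) (l : List (Fin (D.n + 1))) (x : V) :
    D.aux_wfn c (j :: l) x = sAff c (D.aSimple j) (D.aux_wfn c l x) := by
  simp [aux_wfn]

lemma aux_ne (j) : (D.aSimple j).1 ≠ 0 := D.ne_zero _ (D.aux_aSimple_root j)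

lemma aux_end_wfn (l : List (Fin (D.n + 1))) (x : V) : D.aux_end c l (D.aux_wfn c l x) = x := by
  induction l with
  | nil => rfl
  | cons j l ih => rw [aux_wfn_cons, aux_end, aux_sAff_invol (D.aux_ne j), ih]

lemma aux_wfn_end (l : List (Fin (D.n + 1))) (x : V) : D.aux_wfn c l (D.aux_end c l x) = x := by
  induction l generalizing x with
  | nil => rfl
  | cons j l ih => rw [aux_wfn_cons, aux_end, ih, aux_sAff_invol (D.aux_ne j)]

lemma aux_ract_root (l : List (Fin (D.n + 1))) {b : V × ℤ} (hb : b.1 ∈ D.R0) :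
    (D.aux_ract l b).1 ∈ D.R0 := by
  induction l with
  | nil => exact hb
  | cons j l ih => exact aux_sR_root D (D.aux_aSimple_root j) ih

lemma aux_rinv_root (l : List (Fin (D.n + 1))) {b : V × ℤ} (hb : b.1 ∈ D.R0) :
    (D.aux_rinv l b).1 ∈ D.R0 := by
  induction l generalizing b with
  | nil => exact hb
  | cons j l ih => exact ih (aux_sR_root D (D.aux_aSimple_root j) hb)

lemma aux_ract_aval (l : List (Fin (D.n + 1))) {b : V × ℤ} (hb : b.1 ∈ D.R0) (x : V) :
    aval c (D.aux_ract l b) x = aval c b (D.aux_end c l x) := by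
  induction l generalizing x with
  | nil => rfl
  | cons j l ih =>
    rw [aux_ract, aux_sR_aval D c (D.aux_aSimple_root j) (D.aux_ract_root l hb), ih]; rfl

lemma aux_rinv_aval (l : List (Fin (D.n + 1))) {b : V × ℤ} (hb : b.1 ∈ D.R0) (x : V) :
    aval c (D.aux_rinv l b) x = aval c b (D.aux_wfn c l x) := by
  induction l generalizing b with
  | nil => rfl
  | cons j l ih =>
    rw [aux_rinv, ih (aux_sR_root D (D.aux_aSimple_root j) hb),
      aux_sR_aval D c (D.aux_aSimple_root j) hb, aux_wfn_cons]

variable {c}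

lemma aux_root_ext (hc : c ≠ 0) {a b : V × ℤ} (ha : a.1 ∈ D.R0) (hb : b.1 ∈ D.R0)
    (h : ∀ x, aval c a x = aval c b x) : a = b :=
  aux_aval_inj hc (D.ne_zero _ ha) (D.ne_zero _ hb) h

lemma aux_inv_mem (l : List (Fin (D.n + 1))) {b : V × ℤ} (hb : D.IsAffPos b)
    (hn : D.IsAffNeg (D.aux_ract l b)) : b ∈ D.aux_B l := by
  induction l with
  | nil => exact (D.aux_not_both hb hn).elim
  | cons j l ih =>
    rcases D.aux_pos_or_neg (D.aux_ract_root l hb.1) with h | h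
    · by_cases he : D.aux_ract l b = D.aSimple j
      · have : b = D.aux_rinv l (D.aSimple j) := by
          rw [← he]
          refine D.aux_root_ext one_ne_zero hb.1 (D.aux_rinv_root l (D.aux_ract_root l hb.1)) ?_
          intro x
          rw [aux_rinv_aval D _ l (D.aux_ract_root l hb.1), aux_ract_aval D _ l hb.1, aux_end_wfn]
        rw [this]; simp [aux_B]
      · exact (D.aux_not_both (D.aux_sR_pos j h he) hn).elim
    · exact List.mem_cons_of_mem _ (ih h)

lemma aux_reduced (hc : c ≠ 0) {w : Equiv.Perm V} {l : List (Fin (D.n + 1))}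
    (h : D.IsReducedWord c w l) {y : V} (hy : y ∈ D.alcove c) (pre j suf)
    (hl : l = pre ++ j :: suf) : 0 ≤ aval c (D.aSimple j) (D.aux_end c pre y) := by
  obtain ⟨hlen, hw⟩ := h
  have hwf : ∀ x, w x = D.aux_wfn c l x := hw
  have hwi : ∀ x, w⁻¹ x = D.aux_end c l x := by
    intro x
    rw [Equiv.Perm.inv_eq_iff_eq, hwf, aux_wfn_end]
  have key : ∀ b ∈ D.RW c w, D.IsAffPos b ∧ D.IsAffNeg (D.aux_ract l b) := by
    rintro b ⟨hb, b', hb', hm⟩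
    refine ⟨hb, ?_⟩
    have hbR : b'.1 ∈ D.R0 := by simpa using D.aux_neg_mem hb'.1
    have : D.aux_ract l b = b' := by
      refine D.aux_root_ext hc (D.aux_ract_root l hb.1) hbR fun x => ?_
      rw [aux_ract_aval D c l hb.1, ← hwi, hm x]
    rw [this]; exact hb'
  have hsub : D.RW c w ⊆ ((D.aux_B l).toFinset : Set (V × ℤ)) := by
    intro b hb
    simpa using D.aux_inv_mem l (key b hb).1 (key b hb).2
  have heq : D.RW c w = ((D.aux_B l).toFinset : Set (V × ℤ)) := by
    refine Set.eq_of_subset_of_ncard_le hsub ?_ (Finset.finite_toSet _)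
    rw [Set.ncard_coe_finset]
    calc _ ≤ (D.aux_B l).length := List.toFinset_card_le _
      _ = _ := by rw [aux_B_length, hlen]; rfl
  have hmem : D.aux_rinv suf (D.aSimple j) ∈ D.RW c w := by
    rw [heq]; subst hl; simpa using D.aux_B_mem pre j suf
  have hneg := (key _ hmem).2
  have hjR := D.aux_aSimple_root j
  have hae : ∀ x, aval c (D.aux_ract l (D.aux_rinv suf (D.aSimple j))) x =
      - aval c (D.aSimple j) (D.aux_end c pre x) := by
    intro x
    rw [aux_ract_aval D c l (D.aux_rinv_root suf hjR), aux_rinv_aval D c suf hjR]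
    have : D.aux_wfn c suf (D.aux_end c l x) =
        sAff c (D.aSimple j) (D.aux_end c pre x) := by
      have : ∀ x, D.aux_end c l x = D.aux_end c suf (sAff c (D.aSimple j) (D.aux_end c pre x)) := by
        subst hl
        intro x
        clear * -
        induction pre generalizing x with
        | nil => rfl
        | cons i p ih => exact ih _
      rw [this, aux_wfn_end]
    rw [this, aux_aval_sAff (D.aux_ne j)]
  have := hy _ hneg
  rw [aux_aval_neg, hae] at this
  linarith

end Aux2
end RootSystemData

namespace RootSystemData
section Aux3
variable {V : Type*} [NormedAddCommGroup V] [InnerProductSpace ℝ V] (D : RootSystemData V) (c : ℝ)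

lemma aux_exists_p (hc : 1 < c) : ∃ p : V, ∀ b, D.IsAffPos b → 0 < aval c b p := by
  have := D.aux_finDim
  have : CompleteSpace V := FiniteDimensional.complete ℝ V
  let B := basisOfTopLeSpanOfCardEqFinrank D.simpleRoot D.aux_span (by simp [D.rank_eq])
  have hB : ∀ j, B j = D.simpleRoot j := fun j => by simp [B]
  let F : V →L[ℝ] ℝ := LinearMap.toContinuousLinearMap (B.constr ℝ (fun _ => (1 : ℝ)))
  let q : V := (InnerProductSpace.toDual ℝ V).symm F
  have hq : ∀ j, ⟪q, D.simpleRoot j⟫ = 1 := by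
    intro j
    rw [InnerProductSpace.toDual_symm_apply, ← hB]
    exact B.constr_basis ℝ _ j
  have hpos : ∀ α ∈ D.pos, 0 < ⟪q, coroot α⟫ := by
    intro α hα
    have h0 := D.ne_zero _ (D.pos_subset hα)
    rw [aux_coroot_inner]
    refine mul_pos (div_pos two_pos (real_inner_self_pos.2 h0)) ?_
    obtain ⟨k, hk⟩ := D.pos_natCombo α hα
    have : ⟪q, α⟫ = ∑ j, (k j : ℝ) := by
      rw [hk, inner_sum]
      exact Finset.sum_congr rfl fun j _ => by rw [inner_smul_right, hq, mul_one]
    rw [this]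
    refine lt_of_le_of_ne (Finset.sum_nonneg fun _ _ => Nat.cast_nonneg _) fun h => ?_
    have hz := (Finset.sum_eq_zero_iff_of_nonneg (fun _ _ => Nat.cast_nonneg _)).1 h.symm
    apply h0
    rw [hk]
    exact Finset.sum_eq_zero fun j hj => by rw [hz j hj, zero_smul]
  let S : ℝ := 1 + ∑ α ∈ D.R0, |⟪q, coroot α⟫|
  have hS : 0 < S := by
    have : 0 ≤ ∑ α ∈ D.R0, |⟪q, coroot α⟫| := Finset.sum_nonneg fun _ _ => abs_nonneg _
    simp only [S]; linarith
  have hlt : ∀ α ∈ D.R0, |⟪q, coroot α⟫| < S := by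
    intro α hα
    have := Finset.single_le_sum (f := fun α => |⟪q, coroot α⟫|) (fun _ _ => abs_nonneg _) hα
    simp only [S]; linarith
  refine ⟨S⁻¹ • q, ?_⟩
  rintro ⟨α, r⟩ ⟨hα, hr⟩
  simp only [aval, inner_smul_left, conj_trivial] at hα hr ⊢
  rcases hr with hr | ⟨hr, hp⟩
  · have h1 := (abs_lt.1 (hlt α hα)).1
    have h2 : -1 < S⁻¹ * ⟪q, coroot α⟫ := by
      rw [inv_mul_eq_div, lt_div_iff₀ hS]; linarith
    have h3 : (1:ℝ) ≤ r := by exact_mod_cast hr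
    nlinarith
  · subst hr
    have := hpos α hp
    simp; positivity

variable {c}

lemma aux_dist (b : V × ℤ) (hb : b.1 ≠ 0) (x p : V) :
    ‖sAff c b x - p‖ ^ 2 = ‖x - p‖ ^ 2 + ⟪b.1, b.1⟫ * (aval c b x * aval c b p) := by
  have h := aux_self_ne hb
  have e : sAff c b x - p = (x - p) - aval c b x • b.1 := by rw [sAff]; abel
  have h2 : ⟪x - p, b.1⟫ = (aval c b x - aval c b p) * ⟪b.1, b.1⟫ / 2 := by
    simp only [aval, aux_coroot_inner, inner_sub_left]
    field_simp
    ring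
  rw [e, norm_sub_sq_real, inner_smul_right, h2, norm_smul, mul_pow, Real.norm_eq_abs, sq_abs,
    ← real_inner_self_eq_norm_sq b.1]
  ring

lemma aux_dist_lt {b : V × ℤ} (hb : b.1 ≠ 0) {x p : V} (hx : 0 < aval c b x)
    (hp : 0 < aval c b p) : ‖x - p‖ < ‖sAff c b x - p‖ := by
  have h1 := aux_dist (c := c) b hb x p
  have h2 : 0 < ⟪b.1, b.1⟫ := real_inner_self_pos.2 hb
  have h3 : 0 < ⟪b.1, b.1⟫ * (aval c b x * aval c b p) := by positivity
  exact lt_of_pow_lt_pow_left₀ 2 (norm_nonneg _) (by linarith)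

lemma aux_sAff_zero {b : V × ℤ} {x : V} (h : aval c b x = 0) : sAff c b x = x := by
  simp [sAff, h]

variable (c)

/-- an elementary increasing reflection step on points -/
def aux_step (x y : V) : Prop := ∃ b, D.IsAffPos b ∧ 0 < aval c b x ∧ y = sAff c b x

/-- the order generated by the steps -/
def aux_le (x y : V) : Prop := Relation.ReflTransGen (D.aux_step c) x y

variable {c}

lemma aux_le_sAff (j) {y : V} (h : 0 ≤ aval c (D.aSimple j) y) :
    D.aux_le c y (sAff c (D.aSimple j) y) := by
  rcases h.eq_or_lt with h | h
  · rw [aux_sAff_zero h.symm]; exact .refl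
  · exact .single ⟨_, D.aux_aSimple_pos j, h, rfl⟩

lemma aux_sAff_le (j) {y : V} (h : aval c (D.aSimple j) y < 0) :
    D.aux_le c (sAff c (D.aSimple j) y) y := by
  have := D.aux_le_sAff (c := c) j (y := sAff c (D.aSimple j) y)
    (by rw [aux_aval_sAff (D.aux_ne j)]; linarith)
  rwa [aux_sAff_invol (D.aux_ne j)] at this

lemma aux_step_conj (j) {x y : V} {b : V × ℤ} (hb : D.IsAffPos b) (hx : 0 < aval c b x)
    (hy : y = sAff c b x) (hne : b ≠ D.aSimple j) :
    D.aux_step c (sAff c (D.aSimple j) x) (sAff c (D.aSimple j) y) := by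
  have hR := D.aux_aSimple_root j
  have e : aval c (aux_sR (D.aSimple j) b) (sAff c (D.aSimple j) x) = aval c b x := by
    rw [aux_sR_aval D c hR hb.1, aux_sAff_invol (D.aux_ne j)]
  refine ⟨_, D.aux_sR_pos j hb hne, by rwa [e], ?_⟩
  rw [sAff.eq_def c (aux_sR (D.aSimple j) b), e, hy]
  obtain ⟨α, r⟩ := b
  set a := D.aSimple j
  simp only [sAff, aux_sR, aux_aval_sub, smul_sub, sub_smul, smul_smul]
  abel

lemma aux_lift (j) {x y : V} (h : D.aux_le c x y) :
    (0 ≤ aval c (D.aSimple j) y →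
      D.aux_le c (sAff c (D.aSimple j) x) (sAff c (D.aSimple j) y)) ∧
    (aval c (D.aSimple j) y < 0 → D.aux_le c (sAff c (D.aSimple j) x) y) := by
  induction h with
  | refl => exact ⟨fun _ => .refl, fun h => D.aux_sAff_le j h⟩
  | tail hxz hzy ih =>
    rename_i z y
    have hzy' := hzy
    obtain ⟨b, hb, hz, hy⟩ := hzy
    constructor
    · intro hay
      rcases le_or_gt 0 (aval c (D.aSimple j) z) with h | h
      · refine (ih.1 h).tail (D.aux_step_conj j hb hz hy ?_)
        rintro rfl
        rw [hy, aux_aval_sAff (D.aux_ne j)] at hay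
        linarith
      · exact ((ih.2 h).tail hzy').trans (D.aux_le_sAff j hay)
    · intro hay
      rcases le_or_gt 0 (aval c (D.aSimple j) z) with h | h
      · by_cases hne : b = D.aSimple j
        · subst hne
          rw [hy]; exact ih.1 h
        · exact ((ih.1 h).tail (D.aux_step_conj j hb hz hy hne)).trans (D.aux_sAff_le j hay)
      · exact (ih.2 h).tail hzy'

variable (c)
/-- convex hull of the lower set -/
def aux_K (y : V) : Set V := convexHull ℝ {z | D.aux_le c z y}
variable {c}

lemma aux_self_K (y : V) : y ∈ D.aux_K c y := subset_convexHull ℝ _ (Relation.ReflTransGen.refl)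

lemma aux_K_sub (j) {y : V} (h : 0 ≤ aval c (D.aSimple j) y) :
    D.aux_K c y ⊆ D.aux_K c (sAff c (D.aSimple j) y) :=
  convexHull_mono fun _ hz => Relation.ReflTransGen.trans hz (D.aux_le_sAff j h)

lemma aux_sAff_combo (a : V × ℤ) (u v : V) {s t : ℝ} (h : s + t = 1) :
    sAff c a (s • u + t • v) = s • sAff c a u + t • sAff c a v := by
  have : aval c a (s • u + t • v) = s * aval c a u + t * aval c a v := by
    simp only [aval, inner_add_left, inner_smul_left, conj_trivial]
    linear_combination (-(a.2 * c)) * h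
  simp only [sAff, this, smul_sub, smul_smul, add_smul]
  abel

lemma aux_K_refl (j) {y z : V} (h : 0 ≤ aval c (D.aSimple j) y) (hz : z ∈ D.aux_K c y) :
    sAff c (D.aSimple j) z ∈ D.aux_K c (sAff c (D.aSimple j) y) := by
  have hconv : Convex ℝ {z | sAff c (D.aSimple j) z ∈ D.aux_K c (sAff c (D.aSimple j) y)} := by
    intro u hu v hv s t hs ht hst
    simp only [Set.mem_ofPred_eq] at hu hv ⊢
    rw [aux_sAff_combo _ _ _ hst]
    exact convex_convexHull ℝ _ hu hv hs ht hst
  refine convexHull_min ?_ hconv hz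
  intro u hu
  exact subset_convexHull ℝ _ ((D.aux_lift j hu).1 h)

lemma aux_norm_combo {u v p : V} {s t M : ℝ} (hs : 0 ≤ s) (ht : 0 < t) (h : s + t = 1)
    (hu : ‖u - p‖ ≤ M) (hv : ‖v - p‖ < M) : ‖s • u + t • v - p‖ < M := by
  have e : s • u + t • v - p = s • (u - p) + t • (v - p) := by
    have : p = s • p + t • p := by rw [← add_smul, h, one_smul]
    rw [smul_sub, smul_sub]
    nth_rewrite 1 [this]
    abel
  rw [e]
  calc _ ≤ ‖s • (u - p)‖ + ‖t • (v - p)‖ := norm_add_le _ _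
    _ = s * ‖u - p‖ + t * ‖v - p‖ := by
      rw [norm_smul, norm_smul, Real.norm_of_nonneg hs, Real.norm_of_nonneg ht.le]
    _ < s * M + t * M :=
      add_lt_add_of_le_of_lt (mul_le_mul_of_nonneg_left hu hs) (mul_lt_mul_of_pos_left hv ht)
    _ = M := by rw [← add_mul, h, one_mul]

lemma aux_K_lt {p : V} (hp : ∀ b, D.IsAffPos b → 0 < aval c b p) {y z : V}
    (hz : z ∈ D.aux_K c y) : z = y ∨ ‖z - p‖ < ‖y - p‖ := by
  have hconv : Convex ℝ {z | z = y ∨ ‖z - p‖ < ‖y - p‖} := by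
    intro u hu v hv s t hs ht hst
    simp only [Set.mem_ofPred_eq] at hu hv ⊢
    have hu' : ‖u - p‖ ≤ ‖y - p‖ := by rcases hu with rfl | h; exacts [le_rfl, h.le]
    have hv' : ‖v - p‖ ≤ ‖y - p‖ := by rcases hv with rfl | h; exacts [le_rfl, h.le]
    rcases hs.eq_or_lt with rfl | hs
    · have : t = 1 := by linarith
      subst this; simpa using hv
    rcases ht.eq_or_lt with rfl | ht
    · have : s = 1 := by linarith
      subst this; simpa using hu
    rcases hv with rfl | hv
    · rcases hu with rfl | hu
      · left; rw [← add_smul, hst, one_smul]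
      · right; rw [add_comm]; exact aux_norm_combo ht.le hs (by linarith) le_rfl hu
    · right; exact aux_norm_combo hs.le ht hst hu' hv
  refine convexHull_min ?_ hconv hz
  intro u hu
  induction hu using Relation.ReflTransGen.head_induction_on with
  | refl => left; rfl
  | head h _ ih =>
    right
    obtain ⟨b, hb, hx, rfl⟩ := h
    have := aux_dist_lt (D.ne_zero _ hb.1) hx (hp b hb)
    rcases ih with h | h
    · rw [← h]; exact this
    · exact this.trans h

/-- points on the segment `[z, s z]` -/
lemma aux_seg (a : V × ℤ) (z : V) {k : ℝ} (h : aval c a z ≠ 0) :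
    z - k • a.1 = (1 - k / aval c a z) • z + (k / aval c a z) • sAff c a z := by
  have : k = (k / aval c a z) * aval c a z := by field_simp
  simp only [sAff, smul_sub, smul_smul, ← this, sub_smul, one_smul]
  abel

/-- generic points of the segment -/
lemma aux_seg_off {p : V} (hp : ∀ b, D.IsAffPos b → 0 < aval c b p) (j) {y z : V}
    (h : 0 ≤ aval c (D.aSimple j) y) (hz : z ∈ D.aux_K c y) (hne : z ≠ y) {t : ℝ}
    (h0 : 0 ≤ t) (h1 : t ≤ 1) :
    (1 - t) • z + t • sAff c (D.aSimple j) z ∈ D.aux_K c (sAff c (D.aSimple j) y) ∧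
    (1 - t) • z + t • sAff c (D.aSimple j) z ≠ sAff c (D.aSimple j) y := by
  have hz1 := D.aux_K_sub j h hz
  have hz2 := D.aux_K_refl j h hz
  refine ⟨convex_convexHull ℝ _ hz1 hz2 (by linarith) h0 (by ring), ?_⟩
  have hzl : ‖z - p‖ < ‖sAff c (D.aSimple j) y - p‖ := by
    have h3 := (D.aux_K_lt hp hz).resolve_left hne
    rcases h.eq_or_lt with h | h
    · rwa [aux_sAff_zero h.symm]
    · exact h3.trans (aux_dist_lt (D.aux_ne j) h (hp _ (D.aux_aSimple_pos j)))
  have hsl : ‖sAff c (D.aSimple j) z - p‖ < ‖sAff c (D.aSimple j) y - p‖ := by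
    refine (D.aux_K_lt hp hz2).resolve_left fun he => hne ?_
    rw [← aux_sAff_invol (c := c) (D.aux_ne j) z, he, aux_sAff_invol (D.aux_ne j)]
  have : ‖(1 - t) • z + t • sAff c (D.aSimple j) z - p‖ < ‖sAff c (D.aSimple j) y - p‖ := by
    rcases h0.eq_or_lt with rfl | h0
    · simpa using hzl
    · exact aux_norm_combo (by linarith) h0 (by ring) hzl.le hsl
  intro he
  rw [he] at this
  exact lt_irrefl _ this

lemma aux_wordOp_cons {τ : V × ℤ → ℂ} (j l) (g : V → ℂ) :
    D.wordOp c τ (j :: l) g = Iop c τ (D.aSimple j) (D.wordOp c τ l g) := by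
  simp [wordOp]

lemma aux_triang {τ : V × ℤ → ℂ} (hτ : ∀ a : V × ℤ, D.IsAffRoot a → τ a ≠ 0)
    {p : V} (hp : ∀ b, D.IsAffPos b → 0 < aval c b p) (l : List (Fin (D.n + 1))) :
    ∀ y : V, (∀ pre j suf, l = pre ++ j :: suf → 0 ≤ aval c (D.aSimple j) (D.aux_end c pre y)) →
    ∃ d : ℂ, d ≠ 0 ∧ ∀ g : V → ℂ, (∀ z, ‖z - p‖ < ‖D.aux_end c l y - p‖ → g z = 0) →
      (∀ z ∈ D.aux_K c y, z ≠ y → D.wordOp c τ l g z = 0) ∧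
      D.wordOp c τ l g y = d * g (D.aux_end c l y) := by
  induction l with
  | nil =>
    intro y _
    refine ⟨1, one_ne_zero, fun g hg => ⟨fun z hz hne => ?_, ?_⟩⟩
    · exact hg z ((D.aux_K_lt hp hz).resolve_left hne)
    · simp [wordOp, aux_end]
  | cons j l ih =>
    intro y hpath
    have hay : 0 ≤ aval c (D.aSimple j) y := hpath [] j l rfl
    obtain ⟨d, hd, H⟩ := ih (sAff c (D.aSimple j) y)
      (fun pre i suf h => hpath (j :: pre) i suf (by rw [h]; rfl))
    have ht := hτ (D.aSimple j) (D.aux_aSimple_root j)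
    set a := D.aSimple j with ha
    -- the factor
    obtain ⟨e, he, hE⟩ : ∃ e : ℂ, e ≠ 0 ∧ ∀ h : V → ℂ,
        (∀ z ∈ D.aux_K c (sAff c a y), z ≠ sAff c a y → h z = 0) →
        Iop c τ a h y = e * h (sAff c a y) := by
      rcases hay.eq_or_lt with h0 | h0
      · refine ⟨τ a, ht, fun h _ => ?_⟩
        simp [Iop, Jop, ← h0]
      · have hoff : ∀ h : V → ℂ, (∀ z ∈ D.aux_K c (sAff c a y), z ≠ sAff c a y → h z = 0) →
            ∀ k : ℤ, 1 ≤ k → (k:ℝ) < aval c a y → h (y - k • a.1) = 0 := by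
          intro h hh k hk1 hk2
          have hk1' : (1:ℝ) ≤ k := by exact_mod_cast hk1
          have e1 : y - k • a.1 = (1 - k / aval c a y) • y + (k / aval c a y) • sAff c a y := by
            rw [← aux_seg a y h0.ne', Int.cast_smul_eq_zsmul]
          have h1 : (k:ℝ) / aval c a y < 1 := by rw [div_lt_one h0]; exact hk2
          have h2 : 0 ≤ (k:ℝ) / aval c a y := by positivity
          rw [e1]
          apply hh
          · exact convex_convexHull ℝ _ (D.aux_K_sub j hay (D.aux_self_K y)) (D.aux_self_K _)
              (by linarith) h2 (by ring)
          · intro he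
            have h3 := aux_dist_lt (D.aux_ne j) h0 (hp _ (D.aux_aSimple_pos j))
            have := aux_norm_combo (p := p) (u := sAff c a y) (v := y) h2 (t := 1 - k / aval c a y)
              (by linarith) (by ring) le_rfl h3
            rw [add_comm, he] at this
            exact lt_irrefl _ this
        by_cases hfl : (⌊aval c a y⌋ : ℝ) = aval c a y
        · refine ⟨(τ a)⁻¹, inv_ne_zero ht, fun h hh => ?_⟩
          have hs : ∑ k ∈ Finset.Icc (1 : ℤ) ⌊aval c a y⌋, h (y - k • a.1) = h (sAff c a y) := by
            rw [Finset.sum_eq_single_of_mem ⌊aval c a y⌋]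
            · rw [← Int.cast_smul_eq_zsmul ℝ, hfl, sAff]
            · rw [Finset.mem_Icc]
              refine ⟨?_, le_rfl⟩
              have : (0:ℝ) < (⌊aval c a y⌋ : ℝ) := by rw [hfl]; exact h0
              have : 0 < ⌊aval c a y⌋ := by exact_mod_cast this
              omega
            · intro k hk hne
              rw [Finset.mem_Icc] at hk
              refine hoff h hh k hk.1 ?_
              rw [← hfl]
              exact_mod_cast lt_of_le_of_ne hk.2 hne
          rw [Iop, Jop, if_pos h0, hs]
          ring
        · refine ⟨τ a, ht, fun h hh => ?_⟩
          have hs : ∑ k ∈ Finset.Icc (1 : ℤ) ⌊aval c a y⌋, h (y - k • a.1) = 0 := by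
            refine Finset.sum_eq_zero fun k hk => ?_
            rw [Finset.mem_Icc] at hk
            refine hoff h hh k hk.1 ?_
            have h1 : (k:ℝ) ≤ ⌊aval c a y⌋ := by exact_mod_cast hk.2
            exact h1.trans_lt (lt_of_le_of_ne (Int.floor_le _) hfl)
          rw [Iop, Jop, if_pos h0, hs]
          ring
    refine ⟨e * d, mul_ne_zero he hd, fun g hg => ?_⟩
    obtain ⟨H1, H2⟩ := H g hg
    rw [aux_wordOp_cons]
    refine ⟨?_, ?_⟩
    · intro z hz hne
      have hseg : ∀ t : ℝ, 0 ≤ t → t ≤ 1 →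
          D.wordOp c τ l g ((1 - t) • z + t • sAff c a z) = 0 := by
        intro t h0 h1
        have := D.aux_seg_off hp j hay hz hne h0 h1
        exact H1 _ this.1 this.2
      have hs := hseg 1 zero_le_one le_rfl
      simp only [sub_self, zero_smul, zero_add, one_smul] at hs
      rw [Iop, ← ha, hs]
      have hJ : Jop c a (D.wordOp c τ l g) z = 0 := by
        rw [Jop]
        split_ifs with h1 h2
        · rw [neg_eq_zero]
          refine Finset.sum_eq_zero fun k hk => ?_
          rw [Finset.mem_Icc] at hk
          rw [← Int.cast_smul_eq_zsmul ℝ, aux_seg a z h1.ne']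
          have hk1 : (1:ℝ) ≤ k := by exact_mod_cast hk.1
          refine hseg _ (by positivity) ?_
          rw [div_le_one h1]
          exact Int.le_floor.1 hk.2
        · rfl
        · have h3 : aval c a z < 0 := lt_of_le_of_ne (not_lt.1 h1) h2
          refine Finset.sum_eq_zero fun k hk => ?_
          rw [Finset.mem_Ico] at hk
          have hk0 : (0:ℝ) ≤ k := by exact_mod_cast hk.1
          have e1 : z + k • a.1 = z - (-(k:ℝ)) • a.1 := by
            rw [neg_smul, sub_neg_eq_add, Int.cast_smul_eq_zsmul]
          rw [e1, aux_seg a z h2]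
          refine hseg _ (div_nonneg_of_nonpos (by linarith) h3.le) ?_
          rw [div_le_one_of_neg h3]
          have : ⌊aval c a z⌋ < -k := by omega
          have := Int.floor_lt.1 this
          push_cast at this
          linarith
      rw [hJ]; ring
    · rw [hE _ H1, H2, aux_end]; ring

end Aux3
end RootSystemData

namespace RootSystemData
section Aux4
variable {V : Type*} [NormedAddCommGroup V] [InnerProductSpace ℝ V] (D : RootSystemData V) {c : ℝ}

lemma aux_Jop_add (a : V × ℤ) (f g : V → ℂ) (x : V) :
    Jop c a (f + g) x = Jop c a f x + Jop c a g x := by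
  unfold Jop
  split_ifs <;> simp [Finset.sum_add_distrib, add_comm]

lemma aux_Jop_smul (a : V × ℤ) (r : ℂ) (f : V → ℂ) (x : V) :
    Jop c a (r • f) x = r * Jop c a f x := by
  unfold Jop
  split_ifs <;> simp [Finset.mul_sum]

lemma aux_wordOp_add {τ : V × ℤ → ℂ} (l) (f g : V → ℂ) :
    D.wordOp c τ l (f + g) = D.wordOp c τ l f + D.wordOp c τ l g := by
  induction l with
  | nil => rfl
  | cons j l ih =>
    rw [aux_wordOp_cons, aux_wordOp_cons, aux_wordOp_cons, ih]
    funext x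
    simp only [Iop, aux_Jop_add, Pi.add_apply]
    ring

lemma aux_wordOp_smul {τ : V × ℤ → ℂ} (l) (r : ℂ) (f : V → ℂ) :
    D.wordOp c τ l (r • f) = r • D.wordOp c τ l f := by
  induction l with
  | nil => rfl
  | cons j l ih =>
    rw [aux_wordOp_cons, aux_wordOp_cons, ih]
    funext x
    simp only [Iop, aux_Jop_smul, Pi.smul_apply, smul_eq_mul]
    ring

lemma aux_tauw_ne {τ : V × ℤ → ℂ} (hτ : ∀ a : V × ℤ, D.IsAffRoot a → τ a ≠ 0)
    (w : Equiv.Perm V) : D.tauw c τ w ≠ 0 := by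
  unfold tauw
  exact finprod_mem_induction (fun z : ℂ => z ≠ 0) one_ne_zero (fun _ _ => mul_ne_zero)
    (fun a ha => hτ a ha.1.1)

lemma aux_finite (p : V) (M : ℝ) :
    {x : D.weightLattice | ‖(x : V) - p‖ < M}.Finite := by
  choose k hk using fun (x : D.weightLattice) (α : D.R0) => x.2 α.1 α.2
  have hinj : Function.Injective k := by
    intro x y h
    apply Subtype.ext
    rw [← sub_eq_zero]
    have : ∀ v ∈ Submodule.span ℝ (D.R0 : Set V), ⟪(x : V) - y, v⟫ = 0 := by
      intro v hv
      induction hv using Submodule.span_induction with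
      | mem α hα =>
        have h1 : ⟪(x : V) - y, coroot α⟫ = 0 := by
          rw [inner_sub_left, hk x ⟨α, hα⟩, hk y ⟨α, hα⟩, h, sub_self]
        rw [aux_coroot_inner] at h1
        rcases mul_eq_zero.1 h1 with h1 | h1
        · simp at h1; exact absurd h1 (D.ne_zero _ hα)
        · exact h1
      | zero => simp
      | add u v _ _ hu hv => rw [inner_add_right, hu, hv, add_zero]
      | smul r u _ hu => rw [inner_smul_right, hu, mul_zero]
    exact inner_self_eq_zero.1 (this _ (by rw [D.span_top]; trivial))
  refine Set.Finite.of_finite_image (f := k) ?_ hinj.injOn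
  refine (Set.finite_Icc (fun α : D.R0 => -⌈(M + ‖p‖) * ‖coroot α.1‖⌉)
    (fun α : D.R0 => ⌈(M + ‖p‖) * ‖coroot α.1‖⌉)).subset ?_
  rintro _ ⟨x, hx, rfl⟩
  have hx' : ‖(x : V) - p‖ < M := hx
  have hb : ∀ α, |(k x α : ℝ)| ≤ ⌈(M + ‖p‖) * ‖coroot α.1‖⌉ := by
    intro α
    refine le_trans ?_ (Int.le_ceil _)
    rw [← hk x α]
    refine (abs_real_inner_le_norm _ _).trans ?_
    refine mul_le_mul_of_nonneg_right ?_ (norm_nonneg _)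
    have := norm_sub_norm_le (x : V) p
    linarith
  constructor <;> intro α
  · have := (abs_le.1 (hb α)).1
    exact_mod_cast this
  · have := (abs_le.1 (hb α)).2
    exact_mod_cast this

lemma aux_wf (p : V) : WellFounded (fun x y : D.weightLattice => ‖(x : V) - p‖ < ‖(y : V) - p‖) := by
  refine Subrelation.wf (r := InvImage (· < ·) fun y : D.weightLattice =>
    {x : D.weightLattice | ‖(x : V) - p‖ < ‖(y : V) - p‖}.ncard) ?_ (InvImage.wf _ wellFounded_lt)
  intro x y h
  refine Set.ncard_lt_ncard ⟨fun z hz => lt_trans (show ‖(z : V) - p‖ < _ from hz) h, fun hs => ?_⟩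
    (D.aux_finite p _)
  exact lt_irrefl _ (show ‖(x : V) - p‖ < ‖(x : V) - p‖ from hs h)

end Aux4
end RootSystemData

lemma aux_bij {X : Type*} (T : (X → ℂ) → X → ℂ) (hT : IsLinearMap ℂ T) (r : X → X → Prop)
    (hr : WellFounded r) (d : X → ℂ) (hd : ∀ x, d x ≠ 0)
    (h : ∀ x f, (∀ y, r y x → f y = 0) → T f x = d x * f x) : Function.Bijective T := by
  constructor
  · intro f g hfg
    have h0 : T (f - g) = 0 := by rw [hT.map_sub, hfg, sub_self]
    rw [← sub_eq_zero]
    funext x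
    induction x using hr.induction with
    | _ x ih =>
      have := h x (f - g) ih
      rw [h0] at this
      simpa [hd x] using this.symm
  · intro g
    let F : ∀ x, (∀ y, r y x → ℂ) → ℂ := fun x rec =>
      (d x)⁻¹ * (g x - T (fun y => if h : r y x then rec y h else 0) x)
    let f : X → ℂ := hr.fix F
    refine ⟨f, funext fun x => ?_⟩
    let u : X → ℂ := fun y => if r y x then f y else 0
    have hf : f x = (d x)⁻¹ * (g x - T u x) := by
      simp only [f]
      rw [hr.fix_eq]
      simp only [F, u, f, dite_eq_ite]
    have hx : ¬ r x x := fun hxx => hr.asymmetric _ _ hxx hxx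
    have h1 := h x (f - u) (fun y hy => by simp [u, hy])
    rw [hT.map_sub] at h1
    simp only [Pi.sub_apply] at h1
    have h2 : u x = 0 := by simp [u, hx]
    rw [h2, sub_zero, hf, mul_inv_cancel_left₀ (hd x)] at h1
    exact sub_left_injective h1


open RootSystemData in
/-- the intertwining operator `𝒥`, `(𝒥f)(λ) = τ_{w_λ}⁻¹ (I_{w_λ}f)(λ₊)`,
is a linear automorphism of the space of functions `P → ℂ`; in particular it is
bijective. -/
theorem statement6 {V : Type*} [NormedAddCommGroup V] [InnerProductSpace ℝ V]
    (D : RootSystemData V) (cz : ℤ) (hc : 1 < cz)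
    (τ : V × ℤ → ℂ) (hτ : D.IsMultiplicity (cz : ℝ) τ)
    (wmin : V → Equiv.Perm V) (hwmin : D.IsWmin (cz : ℝ) wmin)
    (Iw : Equiv.Perm V → (V → ℂ) → V → ℂ)
    (hIw : ∀ x : V, ∃ l : List (Fin (D.n + 1)),
      D.IsReducedWord (cz : ℝ) (wmin x) l ∧ Iw (wmin x) = D.wordOp (cz : ℝ) τ l) :
    IsLinearMap ℂ (JcalP D (cz : ℝ) τ wmin Iw) ∧
      Function.Bijective (JcalP D (cz : ℝ) τ wmin Iw) := by
  have hc' : (1:ℝ) < cz := by exact_mod_cast hc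
  have hlin : IsLinearMap ℂ (JcalP D (cz : ℝ) τ wmin Iw) := by
    constructor
    · intro f g
      funext x
      obtain ⟨l, -, hl⟩ := hIw x.1
      simp only [JcalP, Jcal, hl, Pi.add_apply]
      rw [← mul_add, ← Pi.add_apply, ← aux_wordOp_add]
      congr 3
      funext z
      by_cases hz : z ∈ D.weightLattice <;> simp [hz]
    · intro r f
      funext x
      obtain ⟨l, -, hl⟩ := hIw x.1
      simp only [JcalP, Jcal, hl, Pi.smul_apply, smul_eq_mul]
      rw [mul_left_comm, ← smul_eq_mul r, ← Pi.smul_apply, ← aux_wordOp_smul]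
      congr 3
      funext z
      by_cases hz : z ∈ D.weightLattice <;> simp [hz]
  refine ⟨hlin, ?_⟩
  obtain ⟨p, hp⟩ := D.aux_exists_p (cz : ℝ) hc'
  have key : ∀ x : D.weightLattice, ∃ d : ℂ, d ≠ 0 ∧ ∀ f : D.weightLattice → ℂ,
      (∀ y : D.weightLattice, ‖(y : V) - p‖ < ‖(x : V) - p‖ → f y = 0) →
      JcalP D (cz : ℝ) τ wmin Iw f x = d * f x := by
    intro x
    obtain ⟨l, hred, hl⟩ := hIw x.1
    have hend : D.aux_end (cz : ℝ) l (wmin x.1 x.1) = x.1 := by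
      have : wmin x.1 x.1 = D.aux_wfn (cz : ℝ) l x.1 := hred.2 x.1
      rw [this, aux_end_wfn]
    obtain ⟨d, hd, H⟩ := D.aux_triang hτ.1 hp l (wmin x.1 x.1)
      (D.aux_reduced (by linarith) hred (hwmin x.1).2.1)
    refine ⟨(D.tauw (cz : ℝ) τ (wmin x.1))⁻¹ * d,
      mul_ne_zero (inv_ne_zero (D.aux_tauw_ne hτ.1 _)) hd, fun f hf => ?_⟩
    rw [hend] at H
    have h2 := (H (fun z => if h : z ∈ D.weightLattice then f ⟨z, h⟩ else 0) (fun z hz => by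
      by_cases hm : z ∈ D.weightLattice
      · simp only [hm, dif_pos]
        exact hf ⟨z, hm⟩ hz
      · simp [hm])).2
    simp only [JcalP, Jcal, hl, h2]
    simp [mul_assoc]
  choose d hd H using key
  exact aux_bij _ hlin _ (D.aux_wf p) d hd H
end
end

section
/- For every μ ∈ P∨ the function 𝒱_μ : V → ℝ is smooth and strictly convex, its Hessian at every ξ ∈ V is the positive-definite bilinear form H_{η,ζ}(ξ) = c⟨η,ζ⟩ + ∑_{α∈R₀} (1−t_α²)⟨η,α⟩⟨ζ,α⟩ / (⟨α,α⟩(1 − 2t_α cos⟨ξ,α⟩ + t_α²)), 𝒱_μ(ξ) → +∞ as ‖ξ‖ → ∞, and 𝒱_μ attains a unique global minimum ξ_μ ∈ V, which is the unique solution of the critical equation c ξ + ∑_{α∈R₀⁺} v_α(⟨ξ,α⟩) α∨ = 2π(ρ∨ + μ). -/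
open scoped RealInnerProductSpace BigOperators Classical

noncomputable section

/-! ### Helper lemmas -/

theorem aux_den_pos {t : ℝ} (ht : t ∈ Set.Ioo (-1 : ℝ) 1) (y : ℝ) :
    0 < 1 - 2 * t * Real.cos y + t ^ 2 := by
  obtain ⟨h1, h2⟩ := ht
  have hc1 := Real.cos_le_one y
  have hc2 := Real.neg_one_le_cos y
  rcases le_total 0 t with h | h
  · nlinarith [mul_nonneg h (sub_nonneg.2 hc1), mul_pos (sub_pos.2 h2) (sub_pos.2 h2)]
  · nlinarith [mul_nonneg (neg_nonneg.2 h) (sub_nonneg.2 hc2),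
      mul_pos (sub_pos.2 h1) (sub_pos.2 h1)]

theorem aux_one_sub_pos {t : ℝ} (ht : t ∈ Set.Ioo (-1 : ℝ) 1) : 0 < 1 - t ^ 2 := by
  nlinarith [ht.1, ht.2]

theorem aux_integrand_contDiff {t : ℝ} (ht : t ∈ Set.Ioo (-1 : ℝ) 1) :
    ContDiff ℝ (⊤ : ℕ∞) (fun y : ℝ => 1 / (1 - 2 * t * Real.cos y + t ^ 2)) := by
  apply ContDiff.div contDiff_const
  · fun_prop
  · intro y
    exact (aux_den_pos ht y).ne'

theorem aux_mvfun_hasDerivAt {t : ℝ} (ht : t ∈ Set.Ioo (-1 : ℝ) 1) (x : ℝ) :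
    HasDerivAt (mvfun t) ((1 - t ^ 2) * (1 / (1 - 2 * t * Real.cos x + t ^ 2))) x := by
  have hcont := (aux_integrand_contDiff ht).continuous
  exact (intervalIntegral.integral_hasDerivAt_right (hcont.intervalIntegrable _ _)
    hcont.aestronglyMeasurable.stronglyMeasurableAtFilter hcont.continuousAt).const_mul _

theorem aux_mvfun_contDiff {t : ℝ} (ht : t ∈ Set.Ioo (-1 : ℝ) 1) :
    ContDiff ℝ (⊤ : ℕ∞) (mvfun t) := by
  rw [contDiff_infty_iff_deriv]
  refine ⟨fun x => (aux_mvfun_hasDerivAt ht x).differentiableAt, ?_⟩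
  have : deriv (mvfun t) = fun x => (1 - t ^ 2) * (1 / (1 - 2 * t * Real.cos x + t ^ 2)) :=
    funext fun x => (aux_mvfun_hasDerivAt ht x).deriv
  rw [this]
  exact contDiff_const.mul (aux_integrand_contDiff ht)

theorem aux_mvfun_mono {t : ℝ} (ht : t ∈ Set.Ioo (-1 : ℝ) 1) : Monotone (mvfun t) := by
  apply monotone_of_deriv_nonneg (fun x => (aux_mvfun_hasDerivAt ht x).differentiableAt)
  intro x
  rw [(aux_mvfun_hasDerivAt ht x).deriv]
  have := aux_den_pos ht x
  have := aux_one_sub_pos ht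
  positivity

theorem aux_mvfun_zero (t : ℝ) : mvfun t 0 = 0 := by simp [mvfun]

/-- The second primitive. -/
def auxF (t x : ℝ) : ℝ := ∫ y in (0:ℝ)..x, mvfun t y

theorem auxF_hasDerivAt {t : ℝ} (ht : t ∈ Set.Ioo (-1 : ℝ) 1) (x : ℝ) :
    HasDerivAt (auxF t) (mvfun t x) x := by
  have hcont := (aux_mvfun_contDiff ht).continuous
  exact intervalIntegral.integral_hasDerivAt_right (hcont.intervalIntegrable _ _)
    hcont.aestronglyMeasurable.stronglyMeasurableAtFilter hcont.continuousAt

theorem auxF_deriv {t : ℝ} (ht : t ∈ Set.Ioo (-1 : ℝ) 1) : deriv (auxF t) = mvfun t :=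
  funext fun x => (auxF_hasDerivAt ht x).deriv

theorem auxF_contDiff {t : ℝ} (ht : t ∈ Set.Ioo (-1 : ℝ) 1) :
    ContDiff ℝ (⊤ : ℕ∞) (auxF t) := by
  rw [contDiff_infty_iff_deriv]
  refine ⟨fun x => (auxF_hasDerivAt ht x).differentiableAt, ?_⟩
  rw [auxF_deriv ht]
  exact aux_mvfun_contDiff ht

theorem auxF_convex {t : ℝ} (ht : t ∈ Set.Ioo (-1 : ℝ) 1) :
    ConvexOn ℝ Set.univ (auxF t) := by
  apply Monotone.convexOn_univ_of_deriv (fun x => (auxF_hasDerivAt ht x).differentiableAt)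
  rw [auxF_deriv ht]
  exact aux_mvfun_mono ht

theorem auxF_nonneg {t : ℝ} (ht : t ∈ Set.Ioo (-1 : ℝ) 1) (x : ℝ) : 0 ≤ auxF t x := by
  unfold auxF
  rcases le_total 0 x with h | h
  · apply intervalIntegral.integral_nonneg h
    intro u hu
    rw [← aux_mvfun_zero t]
    exact aux_mvfun_mono ht hu.1
  · rw [intervalIntegral.integral_symm, ← intervalIntegral.integral_neg]
    apply intervalIntegral.integral_nonneg h
    intro u hu
    have : mvfun t u ≤ mvfun t 0 := aux_mvfun_mono ht hu.2
    rw [aux_mvfun_zero] at this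
    linarith

section AuxMorse

variable {V : Type*} [NormedAddCommGroup V] [InnerProductSpace ℝ V]

/-- The gradient of the Morse function. -/
def auxGrad (D : RootSystemData V) (c : ℝ) (t : V → ℝ) (μ ξ : V) : V :=
  c • ξ - (2 * Real.pi) • (D.rhoVee + μ) + ∑ α ∈ D.pos, mvfun (t α) ⟪ξ, α⟫ • coroot α

theorem aux_morse_eq (D : RootSystemData V) (c : ℝ) (t : V → ℝ) (μ : V) :
    D.morse c t μ = fun ξ => (c / 2) * ⟪ξ, ξ⟫ - 2 * Real.pi * ⟪D.rhoVee + μ, ξ⟫ +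
      ∑ α ∈ D.pos, (2 / ⟪α, α⟫) * auxF (t α) ⟪ξ, α⟫ := rfl

theorem aux_inner_hasFDerivAt (α ξ : V) :
    HasFDerivAt (fun ξ : V => ⟪ξ, α⟫) (innerSL ℝ α) ξ := by
  have : (fun ξ : V => ⟪ξ, α⟫) = innerSL ℝ α := by
    ext x; simp [real_inner_comm]
  rw [this]
  exact (innerSL ℝ α).hasFDerivAt

theorem aux_morse_hasFDerivAt (D : RootSystemData V) (c : ℝ) (t : V → ℝ)
    (ht : ∀ α ∈ D.R0, t α ∈ Set.Ioo (-1 : ℝ) 1) (μ ξ : V) :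
    HasFDerivAt (D.morse c t μ) (innerSL ℝ (auxGrad D c t μ ξ)) ξ := by
  rw [aux_morse_eq]
  have h1 : HasFDerivAt (fun ξ : V => ⟪ξ, ξ⟫) ((2 : ℝ) • innerSL ℝ ξ) ξ := by
    have := (hasFDerivAt_id (𝕜 := ℝ) ξ).inner ℝ (hasFDerivAt_id (𝕜 := ℝ) ξ)
    refine this.congr_fderiv ?_
    ext x
    simp [real_inner_comm, two_mul]
  have h2 : HasFDerivAt (fun ξ : V => ⟪D.rhoVee + μ, ξ⟫) (innerSL ℝ (D.rhoVee + μ)) ξ :=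
    (innerSL ℝ (D.rhoVee + μ)).hasFDerivAt
  have h3 : ∀ α ∈ D.pos, HasFDerivAt (fun ξ : V => (2 / ⟪α, α⟫) * auxF (t α) ⟪ξ, α⟫)
      ((2 / ⟪α, α⟫) • (mvfun (t α) ⟪ξ, α⟫ • innerSL ℝ α)) ξ := by
    intro α hα
    exact ((auxF_hasDerivAt (ht α (D.pos_subset hα)) ⟪ξ, α⟫).comp_hasFDerivAt ξ
      (aux_inner_hasFDerivAt α ξ)).const_mul _
  refine (((h1.const_mul (c / 2)).sub (h2.const_mul (2 * Real.pi))).add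
    (HasFDerivAt.fun_sum h3)).congr_fderiv ?_
  ext x
  simp only [auxGrad, coroot, ContinuousLinearMap.add_apply, ContinuousLinearMap.sub_apply,
    ContinuousLinearMap.smul_apply, ContinuousLinearMap.sum_apply, innerSL_apply_apply,
    smul_eq_mul, inner_add_left, inner_sub_left, real_inner_smul_left, sum_inner]
  congr 1
  · ring
  · exact Finset.sum_congr rfl fun α _ => by ring

/-- The derivative of the gradient. -/
def auxGrad' (D : RootSystemData V) (c : ℝ) (t : V → ℝ) (ξ : V) : V →L[ℝ] V :=
  c • ContinuousLinearMap.id ℝ V + ∑ α ∈ D.pos,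
    (((1 - t α ^ 2) * (1 / (1 - 2 * t α * Real.cos ⟪ξ, α⟫ + t α ^ 2))) •
      innerSL ℝ α).smulRight (coroot α)

theorem auxGrad_hasFDerivAt (D : RootSystemData V) (c : ℝ) (t : V → ℝ)
    (ht : ∀ α ∈ D.R0, t α ∈ Set.Ioo (-1 : ℝ) 1) (μ ξ : V) :
    HasFDerivAt (auxGrad D c t μ) (auxGrad' D c t ξ) ξ := by
  have h3 : ∀ α ∈ D.pos, HasFDerivAt (fun ξ : V => mvfun (t α) ⟪ξ, α⟫ • coroot α)
      ((((1 - t α ^ 2) * (1 / (1 - 2 * t α * Real.cos ⟪ξ, α⟫ + t α ^ 2))) •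
      innerSL ℝ α).smulRight (coroot α)) ξ := by
    intro α hα
    have h := (aux_mvfun_hasDerivAt (ht α (D.pos_subset hα)) ⟪ξ, α⟫).comp_hasFDerivAt ξ
      (aux_inner_hasFDerivAt α ξ)
    exact h.smul_const (coroot α)
  exact (((hasFDerivAt_id (𝕜 := ℝ) ξ).const_smul c).sub_const _).add (HasFDerivAt.fun_sum h3)

theorem aux_neg_mem (D : RootSystemData V) {α : V} (hα : α ∈ D.R0) :
    α - ⟪α, coroot α⟫ • α = -α := by
  have h : ⟪α, α⟫ ≠ 0 := inner_self_ne_zero.2 (D.ne_zero α hα)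
  rw [coroot, real_inner_smul_right, div_mul_cancel₀ _ h]
  module

theorem aux_neg_mem_R0 (D : RootSystemData V) {α : V} (hα : α ∈ D.R0) : -α ∈ D.R0 := by
  have := D.reflect_mem α hα α hα
  rwa [aux_neg_mem D hα] at this

theorem aux_t_neg (D : RootSystemData V) (t : V → ℝ)
    (htinv : ∀ α ∈ D.R0, ∀ β ∈ D.R0, (∃ w ∈ D.W0, w α = β) → t α = t β)
    {α : V} (hα : α ∈ D.R0) : t (-α) = t α := by
  refine (htinv α hα (-α) (aux_neg_mem_R0 D hα) ?_).symm
  have h : ⟪α, α⟫ ≠ 0 := inner_self_ne_zero.2 (D.ne_zero α hα)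
  have hinv : Function.Involutive (fun x : V => x - ⟪x, coroot α⟫ • α) := by
    intro x
    have h2 : ⟪α, coroot α⟫ = 2 := by
      rw [coroot, real_inner_smul_right, div_mul_cancel₀ _ h]
    simp only [inner_sub_left, real_inner_smul_left, h2]
    module
  refine ⟨hinv.toPerm _, Subgroup.subset_closure ⟨α, hα, fun x => rfl⟩, ?_⟩
  exact aux_neg_mem D hα

theorem aux_sum_R0 (D : RootSystemData V) (f : V → ℝ) (hf : ∀ α ∈ D.R0, f (-α) = f α) :
    ∑ α ∈ D.R0, f α = ∑ α ∈ D.pos, 2 * f α := by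
  have hR : D.R0 = D.pos ∪ D.pos.image (fun α => -α) := by
    ext α
    simp only [Finset.mem_union, Finset.mem_image]
    constructor
    · intro hα
      rcases D.pos_or_neg α hα with h | h
      · exact Or.inl h
      · exact Or.inr ⟨-α, h, neg_neg α⟩
    · rintro (h | ⟨β, hβ, rfl⟩)
      · exact D.pos_subset h
      · exact aux_neg_mem_R0 D (D.pos_subset hβ)
  have hd : Disjoint D.pos (D.pos.image (fun α => -α)) := by
    rw [Finset.disjoint_left]
    intro α hα h
    obtain ⟨β, hβ, rfl⟩ := Finset.mem_image.1 h
    exact D.pos_not_both β hβ hα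
  rw [hR, Finset.sum_union hd, Finset.sum_image (by intro a _ b _ h; exact neg_injective h),
    ← Finset.sum_add_distrib]
  refine Finset.sum_congr rfl fun α hα => ?_
  rw [hf α (D.pos_subset hα)]
  ring

theorem aux_hess (D : RootSystemData V) (c : ℝ) (t : V → ℝ)
    (htinv : ∀ α ∈ D.R0, ∀ β ∈ D.R0, (∃ w ∈ D.W0, w α = β) → t α = t β) (ξ η ζ : V) :
    ⟪auxGrad' D c t ξ η, ζ⟫ = D.hessForm c t ξ η ζ := by
  rw [RootSystemData.hessForm, aux_sum_R0]
  · simp only [auxGrad', coroot, ContinuousLinearMap.add_apply,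
      ContinuousLinearMap.smul_apply, ContinuousLinearMap.sum_apply, innerSL_apply_apply,
      ContinuousLinearMap.smulRight_apply, ContinuousLinearMap.id_apply,
      smul_eq_mul, inner_add_left, real_inner_smul_left, sum_inner]
    congr 1
    refine Finset.sum_congr rfl fun α _ => ?_
    rw [real_inner_comm α η, real_inner_comm α ζ, div_eq_mul_inv, div_eq_mul_inv, div_eq_mul_inv,
      mul_inv]
    ring
  · intro α hα
    simp only [aux_t_neg D t htinv hα, inner_neg_right, inner_neg_left, Real.cos_neg]
    ring

theorem aux_grad_mono (D : RootSystemData V) (c : ℝ) (t : V → ℝ)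
    (ht : ∀ α ∈ D.R0, t α ∈ Set.Ioo (-1 : ℝ) 1) (μ ξ η : V) :
    c * ⟪ξ - η, ξ - η⟫ ≤ ⟪auxGrad D c t μ ξ - auxGrad D c t μ η, ξ - η⟫ := by
  have h : auxGrad D c t μ ξ - auxGrad D c t μ η = c • (ξ - η) +
      ∑ α ∈ D.pos, (mvfun (t α) ⟪ξ, α⟫ - mvfun (t α) ⟪η, α⟫) • coroot α := by
    simp only [auxGrad, sub_smul, Finset.sum_sub_distrib, smul_sub]
    abel
  rw [h, inner_add_left, real_inner_smul_left, sum_inner]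
  refine le_add_of_nonneg_right (Finset.sum_nonneg fun α hα => ?_)
  rw [coroot, real_inner_smul_left, real_inner_smul_left, real_inner_comm (ξ - η) α, inner_sub_left]
  have hm := aux_mvfun_mono (ht α (D.pos_subset hα))
  have h0 : 0 ≤ 2 / ⟪α, α⟫ := div_nonneg zero_le_two real_inner_self_nonneg
  have h1 : 0 ≤ (mvfun (t α) ⟪ξ, α⟫ - mvfun (t α) ⟪η, α⟫) * (⟪ξ, α⟫ - ⟪η, α⟫) := by
    rcases le_total ⟪ξ, α⟫ ⟪η, α⟫ with h | h
    · exact mul_nonneg_of_nonpos_of_nonpos (sub_nonpos.2 (hm h)) (sub_nonpos.2 h)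
    · exact mul_nonneg (sub_nonneg.2 (hm h)) (sub_nonneg.2 h)
  calc 0 ≤ (2 / ⟪α, α⟫) * ((mvfun (t α) ⟪ξ, α⟫ - mvfun (t α) ⟪η, α⟫) * (⟪ξ, α⟫ - ⟪η, α⟫)) :=
        mul_nonneg h0 h1
    _ = _ := by ring

theorem aux_morse_contDiff (D : RootSystemData V) (c : ℝ) (t : V → ℝ)
    (ht : ∀ α ∈ D.R0, t α ∈ Set.Ioo (-1 : ℝ) 1) (μ : V) :
    ContDiff ℝ (⊤ : ℕ∞) (D.morse c t μ) := by
  rw [aux_morse_eq]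
  refine ContDiff.add (ContDiff.sub ?_ ?_) (ContDiff.sum fun α hα => ?_)
  · exact contDiff_const.mul (contDiff_id.inner ℝ contDiff_id)
  · exact contDiff_const.mul (contDiff_const.inner ℝ contDiff_id)
  · exact contDiff_const.mul ((auxF_contDiff (ht α (D.pos_subset hα))).comp
      (contDiff_id.inner ℝ contDiff_const))

theorem aux_morse_strictConvex (D : RootSystemData V) (c : ℝ) (hc : 0 < c) (t : V → ℝ)
    (ht : ∀ α ∈ D.R0, t α ∈ Set.Ioo (-1 : ℝ) 1) (μ : V) :
    StrictConvexOn ℝ Set.univ (D.morse c t μ) := by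
  apply StrongConvexOn.strictConvexOn (m := c) _ hc
  rw [strongConvexOn_iff_convex]
  have h : (fun ξ => D.morse c t μ ξ - c / 2 * ‖ξ‖ ^ 2) =
      fun ξ => (innerSL ℝ (-(2 * Real.pi) • (D.rhoVee + μ))).toLinearMap ξ +
      ∑ α ∈ D.pos, (2 / ⟪α, α⟫) * auxF (t α) ⟪ξ, α⟫ := by
    funext ξ
    rw [aux_morse_eq]
    simp only [ContinuousLinearMap.coe_coe, innerSL_apply_apply, real_inner_smul_left,
      real_inner_self_eq_norm_sq]
    ring
  rw [h]
  refine ConvexOn.add (LinearMap.convexOn _ convex_univ) ?_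
  have key : ∀ s : Finset V, s ⊆ D.pos → ConvexOn ℝ Set.univ
      (fun ξ : V => ∑ α ∈ s, (2 / ⟪α, α⟫) * auxF (t α) ⟪ξ, α⟫) := by
    intro s
    induction s using Finset.induction_on with
    | empty => intro _; simpa using convexOn_const (0 : ℝ) convex_univ
    | insert α s hα ih =>
      intro hs
      simp only [Finset.sum_insert hα]
      refine ConvexOn.add ?_ (ih fun x hx => hs (Finset.mem_insert_of_mem hx))
      have hF := auxF_convex (ht α (D.pos_subset (hs (Finset.mem_insert_self _ _))))
      have h0 : 0 ≤ 2 / ⟪α, α⟫ := div_nonneg zero_le_two real_inner_self_nonneg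
      have := (hF.comp_linearMap (innerSL ℝ α).toLinearMap).smul h0
      simpa [Function.comp_def, real_inner_comm] using this
  exact key D.pos subset_rfl

theorem aux_morse_lower (D : RootSystemData V) (c : ℝ) (t : V → ℝ)
    (ht : ∀ α ∈ D.R0, t α ∈ Set.Ioo (-1 : ℝ) 1) (μ ξ : V) :
    ‖ξ‖ * (c / 2 * ‖ξ‖ - 2 * Real.pi * ‖D.rhoVee + μ‖) ≤ D.morse c t μ ξ := by
  rw [aux_morse_eq]
  have h1 : 0 ≤ ∑ α ∈ D.pos, (2 / ⟪α, α⟫) * auxF (t α) ⟪ξ, α⟫ :=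
    Finset.sum_nonneg fun α hα => mul_nonneg (div_nonneg zero_le_two real_inner_self_nonneg)
      (auxF_nonneg (ht α (D.pos_subset hα)) _)
  have h2 := mul_le_mul_of_nonneg_left (real_inner_le_norm (D.rhoVee + μ) ξ)
    (by positivity : 0 ≤ 2 * Real.pi)
  simp only [real_inner_self_eq_norm_sq]
  simp only [real_inner_self_eq_norm_sq] at h1
  nlinarith

theorem aux_morse_tendsto (D : RootSystemData V) (c : ℝ) (hc : 0 < c) (t : V → ℝ)
    (ht : ∀ α ∈ D.R0, t α ∈ Set.Ioo (-1 : ℝ) 1) (μ : V) :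
    Filter.Tendsto (D.morse c t μ) (Filter.comap norm Filter.atTop) Filter.atTop := by
  refine Filter.tendsto_atTop_mono (aux_morse_lower D c t ht μ) ?_
  have h : Filter.Tendsto (fun x : ℝ => x * (c / 2 * x - 2 * Real.pi * ‖D.rhoVee + μ‖))
      Filter.atTop Filter.atTop :=
    Filter.tendsto_id.atTop_mul_atTop₀ (Filter.tendsto_atTop_add_const_right _ _
      (Filter.tendsto_id.const_mul_atTop (half_pos hc)))
  exact h.comp Filter.tendsto_comap

theorem aux_critical_iff (D : RootSystemData V) (c : ℝ) (t : V → ℝ) (μ ξ : V) :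
    D.criticalEq c t μ ξ ↔ auxGrad D c t μ ξ = 0 := by
  rw [RootSystemData.criticalEq, auxGrad, ← sub_eq_zero, sub_add_eq_add_sub]

end AuxMorse

open RootSystemData in
/-- for every coweight `μ`, the Morse function `𝒱_μ` is smooth and
strictly convex, its Hessian is the positive-definite bilinear form `H_{η,ζ}(ξ)`,
`𝒱_μ(ξ) → +∞` as `‖ξ‖ → ∞`, and `𝒱_μ` attains a unique global minimum `ξ_μ`, which is
the unique solution of the critical equation. -/
theorem statement10 {V : Type*} [NormedAddCommGroup V] [InnerProductSpace ℝ V]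
    (D : RootSystemData V) (c : ℝ) (hc : 0 < c)
    (t : V → ℝ) (ht : ∀ α ∈ D.R0, t α ∈ Set.Ioo (-1 : ℝ) 1)
    (htinv : ∀ α ∈ D.R0, ∀ β ∈ D.R0, (∃ w ∈ D.W0, w α = β) → t α = t β)
    (μ : V) (hμ : μ ∈ D.coweightLattice) :
    ContDiff ℝ (⊤ : ℕ∞) (D.morse c t μ) ∧
    StrictConvexOn ℝ Set.univ (D.morse c t μ) ∧
    (∀ ξ η ζ : V, iteratedFDeriv ℝ 2 (D.morse c t μ) ξ ![η, ζ] = D.hessForm c t ξ η ζ) ∧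
    (∀ ξ η : V, η ≠ 0 → 0 < D.hessForm c t ξ η η) ∧
    Filter.Tendsto (D.morse c t μ) (Filter.comap norm Filter.atTop) Filter.atTop ∧
    (∃ ξmin : V, (∀ ζ : V, D.morse c t μ ξmin ≤ D.morse c t μ ζ) ∧
      (∀ ξ' : V, (∀ ζ : V, D.morse c t μ ξ' ≤ D.morse c t μ ζ) → ξ' = ξmin) ∧
      D.criticalEq c t μ ξmin ∧
      (∀ ξ' : V, D.criticalEq c t μ ξ' → ξ' = ξmin)) := by
  have hconv := aux_morse_strictConvex D c hc t ht μ
  have htend := aux_morse_tendsto D c hc t ht μ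
  have hsmooth := aux_morse_contDiff D c t ht μ
  refine ⟨hsmooth, hconv, ?_, ?_, htend, ?_⟩
  · intro ξ η ζ
    rw [iteratedFDeriv_two_apply]
    have h1 : fderiv ℝ (D.morse c t μ) = fun ξ => innerSL ℝ (auxGrad D c t μ ξ) :=
      funext fun ξ => (aux_morse_hasFDerivAt D c t ht μ ξ).fderiv
    have h2 : HasFDerivAt (fun ξ => innerSL ℝ (auxGrad D c t μ ξ))
        ((innerSL ℝ : V →L[ℝ] V →L[ℝ] ℝ).comp (auxGrad' D c t ξ)) ξ :=
      (innerSL ℝ : V →L[ℝ] V →L[ℝ] ℝ).hasFDerivAt.comp ξ (auxGrad_hasFDerivAt D c t ht μ ξ)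
    rw [h1, h2.fderiv, ← aux_hess D c t htinv]
    rfl
  · intro ξ η hη
    refine add_pos_of_pos_of_nonneg (mul_pos hc (real_inner_self_pos.2 hη)) ?_
    refine Finset.sum_nonneg fun α hα => ?_
    have h1 := aux_one_sub_pos (ht α hα)
    have h2 := aux_den_pos (ht α hα) ⟪ξ, α⟫
    have h3 : 0 ≤ ⟪α, α⟫ := real_inner_self_nonneg
    rw [mul_assoc]
    exact div_nonneg (mul_nonneg h1.le (mul_self_nonneg _)) (mul_nonneg h3 h2.le)
  · haveI : FiniteDimensional ℝ V :=
      Module.finite_of_finrank_pos (by rw [D.rank_eq]; exact D.n_pos)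
    haveI : ProperSpace V := FiniteDimensional.proper ℝ V
    obtain ⟨ξm, hm⟩ := hsmooth.continuous.exists_forall_le
      (by rwa [← Metric.cobounded_eq_cocompact, ← comap_norm_atTop])
    have hg : auxGrad D c t μ ξm = 0 := by
      have hloc : IsLocalMin (D.morse c t μ) ξm := Filter.Eventually.of_forall hm
      have h0 := hloc.hasFDerivAt_eq_zero (aux_morse_hasFDerivAt D c t ht μ ξm)
      have h1 := congrArg (fun L : V →L[ℝ] ℝ => L (auxGrad D c t μ ξm)) h0
      simpa using h1
    refine ⟨ξm, hm, ?_, (aux_critical_iff D c t μ ξm).2 hg, ?_⟩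
    · intro ξ' h'
      exact hconv.eq_of_isMinOn (fun z _ => h' z) (fun z _ => hm z) trivial trivial
    · intro ξ' h'
      rw [aux_critical_iff] at h'
      have h1 := aux_grad_mono D c t ht μ ξ' ξm
      rw [h', hg, sub_zero, inner_zero_left] at h1
      by_contra hne
      have h2 := mul_pos hc (real_inner_self_pos.2 (sub_ne_zero.2 hne))
      linarith
end
end
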